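/- Let D be a domain in ℂⁿ and U an open set with D ∩ U ≠ ∅ and D ∖ U ≠ ∅. Then for every z ∈ D ∩ U one has σ_{D∩U}(z) ≥ σ_D(z) · inf_{w ∈ D ∩ ∂U} exp(g_D(w,z)). -/

import Mathlib

open Set Metric Filter Topology
open scoped Classical

noncomputable section

/-- `ℂⁿ` with the Euclidean norm. -/
abbrev Cn (n : ℕ) := EuclideanSpace ℂ (Fin n)

/-- A function `u : ℂⁿ → [-∞,∞)` (with values in `EReal`) is plurisubharmonic on `D` if it
is upper semicontinuous on `D` and satisfies the sub-mean-value inequality on every closed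
disc in a complex line contained in `D` (stated via continuous majorants on the boundary
circle, so as to handle the value `-∞`). -/
def PSHOn {n : ℕ} (u : Cn n → EReal) (D : Set (Cn n)) : Prop :=
  UpperSemicontinuousOn u D ∧
  ∀ a ∈ D, ∀ b : Cn n, ∀ r : ℝ, 0 < r →
    (∀ t : ℂ, ‖t‖ ≤ r → a + t • b ∈ D) →
    ∀ g : ℝ → ℝ, Continuous g →
      (∀ θ : ℝ, u (a + ((r : ℂ) * Complex.exp (θ * Complex.I)) • b) ≤ (g θ : EReal)) →
      u a ≤ (((1 / (2 * Real.pi)) * ∫ θ in (0:ℝ)..(2 * Real.pi), g θ : ℝ) : EReal)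

/-- The real exponential extended to `EReal`, with `exp(-∞) = 0` (the value at `⊤`,
irrelevant here, is also set to `0`). -/
def erexp (x : EReal) : ℝ := if x = ⊥ then 0 else if x = ⊤ then 0 else Real.exp x.toReal

/-- The pluricomplex Green function of `D` with pole at `z`:
`g_D(z,w) = sup {u(w) : u psh on D, u < 0, u ≤ log‖·-z‖ + C near z for some C}`. -/
def greenFn {n : ℕ} (D : Set (Cn n)) (z w : Cn n) : EReal :=
  sSup {t : EReal | ∃ u : Cn n → EReal, PSHOn u D ∧ (∀ x ∈ D, u x < 0) ∧
    (∃ C : ℝ, ∀ᶠ x in 𝓝[D] z, u x ≤ ((Real.log ‖x - z‖ + C : ℝ) : EReal)) ∧ t = u w}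

/-- The squeezing function of `D`: the supremum of all `r > 0` such that some holomorphic
embedding `f : D → 𝔹ₙ` with `f z = 0` satisfies `r𝔹ₙ ⊆ f(D)` (equal to `0` if no such
embedding exists, by the convention `sSup ∅ = 0` in `ℝ`). -/
def squeezing {n : ℕ} (D : Set (Cn n)) (z : Cn n) : ℝ :=
  sSup {r : ℝ | 0 < r ∧ ∃ f : Cn n → Cn n, DifferentiableOn ℂ f D ∧ InjOn f D ∧
    MapsTo f D (ball (0 : Cn n) 1) ∧ f z = 0 ∧ ball (0 : Cn n) r ⊆ f '' D}

/-!
Let `f` embed `D` into the ball with `f z = 0` and `r𝔹 ⊆ f(D)`. For `w ∈ D` with `0 < ‖f w‖ < r`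
the map `ζ ↦ f⁻¹(ζ f(w))` is an analytic disc in `D`, of radius `r / ‖f w‖`, with `1 ↦ w` and
`0 ↦ z`; comparing the competitors for `g_D(w, ·)` along it with the Green function of the disc
gives `g_D(w, z) ≤ log (‖f w‖ / r)`. Hence, if `m` is the infimum of `exp g_D(w, z)` over
`w ∈ D ∩ ∂U`, the connected set `f⁻¹(rm𝔹)` contains `z` and misses `∂U`. It lies therefore in `U`,
and the restriction of `f` to `D ∩ U` is a competitor with radius `rm`.

This rests on two facts. An injective holomorphic map between spaces of the same finite dimension
has a holomorphic inverse (Osgood), by induction on the dimension: at a point where `f' ≠ 0` one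
restricts `f` to a level set of one of its components, and `f' = 0` is impossible because `f` would
be locally constant along the zero set of `det f'`. And plurisubharmonic functions, defined by
testing on complex lines, satisfy the maximum principle along curved analytic discs.
-/

section HolomorphicMaps

variable {E : Type*} {F : Type*} [NormedAddCommGroup E] [NormedSpace ℂ E]
  [NormedAddCommGroup F] [NormedSpace ℂ F] {f : E → F} {V : Set E}

lemma hasDerivAt_comp_add_smul {x v : E} {t : ℂ} (hf : DifferentiableAt ℂ f (x + t • v)) :
    HasDerivAt (fun s : ℂ => f (x + s • v)) (fderiv ℂ f (x + t • v) v) t := by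
  have hline : HasDerivAt (fun s : ℂ => x + s • v) v t := by
    simpa using ((hasDerivAt_id t).smul_const v).const_add x
  exact hf.hasFDerivAt.comp_hasDerivAt t hline

lemma differentiableOn_comp_add_smul (hV : IsOpen V) (hf : DifferentiableOn ℂ f V) {x v : E}
    {T : Set ℂ} (hT : ∀ t ∈ T, x + t • v ∈ V) :
    DifferentiableOn ℂ (fun t : ℂ => f (x + t • v)) T := fun t ht =>
  (hasDerivAt_comp_add_smul
    (hf.differentiableAt (hV.mem_nhds (hT t ht)))).differentiableAt.differentiableWithinAt

lemma dist_le_dist_of_dist_center_le {c x y : E} {R M : ℝ} (hR : 0 < R)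
    (hf : DifferentiableOn ℂ f (ball c (2 * R))) (hM : ∀ z ∈ ball c (2 * R), dist (f z) (f c) ≤ M)
    (hx : x ∈ ball c R) (hy : y ∈ ball x R) : dist (f y) (f x) ≤ 2 * M / R * dist y x := by
  have hsub : ball x R ⊆ ball c (2 * R) :=
    ball_subset_ball' (by linarith [mem_ball.1 hx])
  refine Complex.dist_le_div_mul_dist_of_mapsTo_ball (hf.mono hsub) (fun z hz => ?_) hy
  calc dist (f z) (f x) ≤ dist (f z) (f c) + dist (f x) (f c) := dist_triangle_right _ _ _
    _ ≤ M + M := add_le_add (hM z (hsub hz)) (hM x (ball_subset_ball (by linarith) hx))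
    _ = 2 * M := (two_mul M).symm

-- `f'(c + h) - f'(c)` is the derivative at `c` of `y ↦ f (y + h) - f y`, which is `O(‖h‖)`.
lemma dist_fderiv_le {c x : E} {R L : ℝ} (hf : DifferentiableOn ℂ f (ball c (2 * R)))
    (hlip : ∀ y ∈ ball c R, ∀ z ∈ ball y R, dist (f z) (f y) ≤ L * dist z y)
    (hx : x ∈ ball c R) : dist (fderiv ℂ f x) (fderiv ℂ f c) ≤ 2 * L / R * dist x c := by
  have hR : 0 < R := pos_of_mem_ball hx
  set h := x - c with hh
  have hhR : ‖h‖ < R := by rwa [hh, ← dist_eq_norm]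
  have hda : ∀ y ∈ ball c R, DifferentiableAt ℂ f y ∧ DifferentiableAt ℂ f (y + h) :=
    fun y hy => by
      rw [mem_ball_iff_norm] at hy
      have hyh : ‖y + h - c‖ < 2 * R := by
        rw [add_sub_right_comm]
        linarith [norm_add_le (y - c) h]
      exact ⟨hf.differentiableAt (isOpen_ball.mem_nhds (mem_ball_iff_norm.2 (by linarith))),
        hf.differentiableAt (isOpen_ball.mem_nhds (mem_ball_iff_norm.2 hyh))⟩
  have hdiff : ∀ y ∈ ball c R, DifferentiableAt ℂ (fun y => f (y + h) - f y) y := fun y hy =>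
    ((differentiableAt_comp_add_right h).2 (hda y hy).2).sub (hda y hy).1
  have hsmall : ∀ y ∈ ball c R, ‖f (y + h) - f y‖ ≤ L * ‖h‖ := fun y hy => by
    simpa [dist_eq_norm] using hlip y hy (y + h) (by simpa using hhR)
  have hmaps : MapsTo (fun y => f (y + h) - f y) (ball c R)
      (closedBall (f (c + h) - f c) (2 * (L * ‖h‖))) := fun y hy => by
    rw [mem_closedBall, two_mul]
    exact (dist_le_norm_add_norm _ _).trans
      (add_le_add (hsmall y hy) (hsmall c (mem_ball_self hR)))
  have hder : fderiv ℂ (fun y => f (y + h) - f y) c = fderiv ℂ f x - fderiv ℂ f c := by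
    obtain ⟨hc, hch⟩ := hda c (mem_ball_self hR)
    rw [fderiv_fun_sub ((differentiableAt_comp_add_right h).2 hch) hc, fderiv_comp_add_right,
      hh, add_sub_cancel]
  calc dist (fderiv ℂ f x) (fderiv ℂ f c) ≤ 2 * (L * ‖h‖) / R := by
        rw [dist_eq_norm, ← hder]
        exact Complex.norm_fderiv_le_div_of_mapsTo_ball
          (fun y hy => (hdiff y hy).differentiableWithinAt) hmaps hR
    _ = 2 * L / R * dist x c := by rw [dist_eq_norm]; ring

lemma continuousOn_fderiv_of_differentiableOn (hV : IsOpen V) (hf : DifferentiableOn ℂ f V) :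
    ContinuousOn (fderiv ℂ f) V := by
  intro c hc
  obtain ⟨R, hR, hRV⟩ : ∃ R > 0, ball c (2 * R) ⊆ {x ∈ V | dist (f x) (f c) < 1} := by
    obtain ⟨r, hr, hrV⟩ := Metric.mem_nhds_iff.1 (inter_mem (hV.mem_nhds hc)
      ((hf.differentiableAt (hV.mem_nhds hc)).continuousAt.eventually (ball_mem_nhds _ one_pos)))
    exact ⟨r / 2, half_pos hr, by rwa [mul_div_cancel₀ _ two_ne_zero]⟩
  have hfR : DifferentiableOn ℂ f (ball c (2 * R)) := hf.mono fun x hx => (hRV hx).1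
  have hlip : ∀ x ∈ ball c R, ∀ y ∈ ball x R, dist (f y) (f x) ≤ 2 * 1 / R * dist y x :=
    fun x hx y hy => dist_le_dist_of_dist_center_le hR hfR (fun z hz => (hRV hz).2.le) hx hy
  refine ContinuousAt.continuousWithinAt (tendsto_iff_dist_tendsto_zero.2 ?_)
  have hlim : Tendsto (fun x => 2 * (2 * 1 / R) / R * dist x c) (𝓝 c) (𝓝 0) := by
    simpa using (tendsto_iff_dist_tendsto_zero.1 (tendsto_id (x := 𝓝 c))).const_mul
      (2 * (2 * 1 / R) / R)
  exact squeeze_zero' (Eventually.of_forall fun _ => dist_nonneg)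
    (eventually_of_mem (ball_mem_nhds c hR) fun x hx => dist_fderiv_le hfR hlip hx) hlim

lemma contDiffAt_one_of_differentiableOn (hV : IsOpen V) (hf : DifferentiableOn ℂ f V) {x : E}
    (hx : x ∈ V) : ContDiffAt ℂ 1 f x := by
  refine contDiffAt_one_iff.2 ⟨fderiv ℂ f, V, hV.mem_nhds hx,
    continuousOn_fderiv_of_differentiableOn hV hf, fun y hy => ?_⟩
  exact (hf.differentiableAt (hV.mem_nhds hy)).hasFDerivAt

lemma hasStrictFDerivAt_of_differentiableOn (hV : IsOpen V) (hf : DifferentiableOn ℂ f V) {x : E}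
    (hx : x ∈ V) : HasStrictFDerivAt f (fderiv ℂ f x) x :=
  (contDiffAt_one_of_differentiableOn hV hf hx).hasStrictFDerivAt one_ne_zero

lemma eventually_forall_add_smul_mem (hV : IsOpen V) {K : Set ℂ} (hK : IsCompact K) {x v : E}
    (hx : ∀ t ∈ K, x + t • v ∈ V) : ∀ᶠ y in 𝓝 x, ∀ t ∈ K, y + t • v ∈ V :=
  hK.eventually_forall_of_forall_eventually fun t ht =>
    (by fun_prop : Continuous fun p : E × ℂ => p.1 + p.2 • v).continuousAt.eventually
      (hV.mem_nhds (hx t ht))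

lemma eventually_add_smul_mem {x : E} (hV : V ∈ 𝓝 x) (v : E) : ∀ᶠ t : ℂ in 𝓝 0, x + t • v ∈ V :=
  ((by fun_prop : Continuous fun t : ℂ => x + t • v).tendsto' 0 x (by simp)).eventually_mem hV

lemma continuous_circleMap_smul_add_smul (hf : ContinuousOn f V) {k : ℂ → ℂ} {r : ℝ} (hr : 0 ≤ r)
    (hk : ContinuousOn k (sphere 0 r)) {x v : E} (hx : ∀ t ∈ sphere (0 : ℂ) r, x + t • v ∈ V) :
    Continuous fun θ => deriv (circleMap 0 r) θ •
      k (circleMap 0 r θ) • f (x + circleMap 0 r θ • v) := by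
  have hmem : ∀ θ, circleMap 0 r θ ∈ sphere (0 : ℂ) r := circleMap_mem_sphere 0 hr
  simp only [deriv_circleMap]
  exact (by fun_prop : Continuous fun θ => circleMap 0 r θ * Complex.I).smul
    ((hk.comp_continuous (continuous_circleMap 0 r) hmem).smul
      (hf.comp_continuous (by fun_prop) fun θ => hx _ (hmem θ)))

lemma differentiableAt_circleIntegral_smul_add_smul (hV : IsOpen V)
    (hf : DifferentiableOn ℂ f V) {k : ℂ → ℂ} {r : ℝ} (hr : 0 ≤ r)
    (hk : ContinuousOn k (sphere 0 r)) {c v : E} (hc : ∀ t ∈ sphere (0 : ℂ) r, c + t • v ∈ V) :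
    DifferentiableAt ℂ (fun x => ∮ t in C(0, r), k t • f (x + t • v)) c := by
  have hf' := continuousOn_fderiv_of_differentiableOn hV hf
  have hmem : ∀ θ, circleMap 0 r θ ∈ sphere (0 : ℂ) r := circleMap_mem_sphere 0 hr
  obtain ⟨M, hM⟩ : ∃ M, ∀ t ∈ sphere (0 : ℂ) r, ‖fderiv ℂ f (c + t • v)‖ < M := by
    obtain ⟨M, hM⟩ := (isCompact_sphere (0 : ℂ) r).exists_bound_of_continuousOn
      (hf'.comp (by fun_prop : Continuous fun t : ℂ => c + t • v).continuousOn hc)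
    exact ⟨M + 1, fun t ht => (hM t ht).trans_lt (lt_add_one M)⟩
  have hopen : IsOpen (V ∩ fderiv ℂ f ⁻¹' ball 0 M) := hf'.isOpen_inter_preimage hV isOpen_ball
  obtain ⟨s, hs, hsV⟩ := (eventually_forall_add_smul_mem hopen (isCompact_sphere 0 r)
    fun t ht => ⟨hc t ht, mem_ball_zero_iff.2 (hM t ht)⟩).exists_mem
  have hcont : ∀ᶠ x in 𝓝 c, Continuous fun θ => deriv (circleMap 0 r) θ •
      k (circleMap 0 r θ) • f (x + circleMap 0 r θ • v) := by
    filter_upwards [hs] with x hx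
    exact continuous_circleMap_smul_add_smul hf.continuousOn hr hk fun t ht => (hsV x hx t ht).1
  have hweight : Continuous fun θ => ‖deriv (circleMap 0 r) θ‖ * (‖k (circleMap 0 r θ)‖ * M) := by
    simp only [deriv_circleMap]
    exact (by fun_prop : Continuous fun θ => ‖circleMap 0 r θ * Complex.I‖).mul
      ((hk.comp_continuous (continuous_circleMap 0 r) hmem).norm.mul_const M)
  refine (intervalIntegral.hasFDerivAt_integral_of_dominated_of_fderiv_le (𝕜 := ℂ) hs
    (F' := fun x θ => deriv (circleMap 0 r) θ •
      k (circleMap 0 r θ) • fderiv ℂ f (x + circleMap 0 r θ • v))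
    (hcont.mono fun x hx => hx.aestronglyMeasurable)
    (hcont.self_of_nhds.intervalIntegrable _ _)
    (continuous_circleMap_smul_add_smul hf' hr hk hc).aestronglyMeasurable
    (Eventually.of_forall fun θ _ x hx => ?_) (hweight.intervalIntegrable _ _)
    (Eventually.of_forall fun θ _ x hx => ?_)).differentiableAt
  · rw [norm_smul, norm_smul]
    gcongr
    exact (mem_ball_zero_iff.1 (hsV x hx _ (hmem θ)).2).le
  · exact ((hasFDerivAt_comp_add_right _).2 (hf.differentiableAt
      (hV.mem_nhds (hsV x hx _ (hmem θ)).1)).hasFDerivAt).const_smul _ |>.const_smul _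

lemma fderiv_apply_eq_circleIntegral [CompleteSpace F] (hV : IsOpen V)
    (hf : DifferentiableOn ℂ f V) {x v : E} {r : ℝ} (hr : 0 < r)
    (hx : ∀ t ∈ closedBall (0 : ℂ) r, x + t • v ∈ V) :
    fderiv ℂ f x v =
      (2 * Real.pi * Complex.I : ℂ)⁻¹ • ∮ t in C(0, r), (1 / (t - 0) ^ 2) • f (x + t • v) := by
  have h0 : x + (0 : ℂ) • v ∈ V := hx 0 (mem_closedBall_self hr.le)
  have hderiv := (hasDerivAt_comp_add_smul (hf.differentiableAt (hV.mem_nhds h0))).deriv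
  rw [zero_smul, add_zero] at hderiv
  rw [eq_inv_smul_iff₀ Complex.two_pi_I_ne_zero, ← hderiv]
  exact ((differentiableOn_comp_add_smul hV hf hx).deriv_eq_smul_circleIntegral hr).symm

lemma differentiableOn_fderiv_apply [CompleteSpace F] (hV : IsOpen V)
    (hf : DifferentiableOn ℂ f V) (v : E) : DifferentiableOn ℂ (fun x => fderiv ℂ f x v) V := by
  intro c hc
  obtain ⟨⟨s, r⟩, ⟨hs, hr⟩, hsr⟩ := (nhds_basis_ball.prod_nhds nhds_basis_closedBall).mem_iff.1
    ((by fun_prop : Continuous fun p : E × ℂ => p.1 + p.2 • v).continuousAt.preimage_mem_nhds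
      (hV.mem_nhds (show (fun p : E × ℂ => p.1 + p.2 • v) (c, 0) ∈ V by simpa using hc)))
  have hmem : ∀ x ∈ ball c s, ∀ t ∈ closedBall (0 : ℂ) r, x + t • v ∈ V :=
    fun x hx t ht => hsr (mk_mem_prod hx ht)
  have hrep : (fun x => fderiv ℂ f x v) =ᶠ[𝓝 c] fun x =>
      (2 * Real.pi * Complex.I : ℂ)⁻¹ • ∮ t in C(0, r), (1 / (t - 0) ^ 2) • f (x + t • v) := by
    filter_upwards [ball_mem_nhds c hs] with x hx
    exact fderiv_apply_eq_circleIntegral hV hf hr (hmem x hx)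
  have hk : ContinuousOn (fun t : ℂ => 1 / (t - 0) ^ 2) (sphere 0 r) :=
    continuousOn_const.div (by fun_prop) fun t ht => by
      simpa using ne_of_mem_sphere ht hr.ne'
  have hdiff := (differentiableAt_circleIntegral_smul_add_smul hV hf hr.le hk
    fun t ht => hmem c (mem_ball_self hs) t (sphere_subset_closedBall ht)).const_smul
      (2 * Real.pi * Complex.I : ℂ)⁻¹
  exact (hdiff.congr_of_eventuallyEq hrep).differentiableWithinAt

lemma exists_differentiableOn_ker_coe_eq {l : F →L[ℂ] ℂ} (hf : DifferentiableOn ℂ f V)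
    (hl : ∀ x ∈ V, l (f x) = 0) :
    ∃ φ : E → l.ker, DifferentiableOn ℂ φ V ∧ ∀ x ∈ V, (φ x : F) = f x := by
  obtain ⟨p, hp⟩ := l.ker_closedComplemented_of_finiteDimensional_range
  exact ⟨p ∘ f, p.differentiable.comp_differentiableOn hf,
    fun x hx => congrArg Subtype.val (hp ⟨f x, hl x hx⟩)⟩

end HolomorphicMaps

section Straightening

variable {E F : Type*} [NormedAddCommGroup E] [NormedSpace ℂ E] [CompleteSpace E]
  [NormedAddCommGroup F] [NormedSpace ℂ F] {V : Set E}

lemma exists_differentiableOn_rightInverse {f : E → F} (hV : IsOpen V)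
    (hf : DifferentiableOn ℂ f V) {b : E} (hb : b ∈ V) {A : E ≃L[ℂ] F}
    (hA : HasFDerivAt f (A : E →L[ℂ] F) b) :
    ∃ (Θ : F → E) (W : Set F), IsOpen W ∧ f b ∈ W ∧ DifferentiableOn ℂ Θ W ∧ MapsTo Θ W V ∧
      (∀ y ∈ W, f (Θ y) = y) ∧ Θ (f b) = b ∧ HasFDerivAt Θ (A.symm : F →L[ℂ] E) (f b) := by
  have hcd := contDiffAt_one_of_differentiableOn hV hf hb
  have hstrict := hcd.hasStrictFDerivAt' hA one_ne_zero
  set Θ := hcd.localInverse hA one_ne_zero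
  have hΘb : Θ (f b) = b := hcd.localInverse_apply_image hA one_ne_zero
  have hΘ : ContDiffAt ℂ 1 Θ (f b) := hcd.to_localInverse hA one_ne_zero
  obtain ⟨W, hW, hWo, hbW⟩ := _root_.eventually_nhds_iff.1
    ((hΘ.eventually (by simp)).and (hstrict.eventually_right_inverse.and
      (hΘ.continuousAt.eventually_mem (hV.mem_nhds (hΘb.symm ▸ hb)))))
  exact ⟨Θ, W, hWo, hbW,
    fun y hy => ((hW y hy).1.differentiableAt one_ne_zero).differentiableWithinAt,
    fun y hy => (hW y hy).2.2, fun y hy => (hW y hy).2.1, hΘb, hstrict.to_localInverse.hasFDerivAt⟩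

-- A local inverse of `x ↦ x + (g x - g b - g'(b) (x - b)) • v`, where `g'(b) v = 1`.
lemma exists_chart_straightening {g : E → ℂ} (hV : IsOpen V) (hg : DifferentiableOn ℂ g V) {b : E}
    (hb : b ∈ V) (hgb : fderiv ℂ g b ≠ 0) :
    ∃ (Θ : E → E) (W : Set E), IsOpen W ∧ b ∈ W ∧ DifferentiableOn ℂ Θ W ∧ MapsTo Θ W V ∧
      InjOn Θ W ∧ Θ b = b ∧ HasFDerivAt Θ (ContinuousLinearMap.id ℂ E) b ∧
      ∀ y ∈ W, g (Θ y) = g b + fderiv ℂ g b (y - b) := by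
  set L := fderiv ℂ g b
  obtain ⟨v, hv⟩ : ∃ v, L v = 1 := by
    obtain ⟨w, hw⟩ := DFunLike.ne_iff.1 hgb
    exact ⟨(L w)⁻¹ • w, by simpa using inv_mul_cancel₀ hw⟩
  set Ψ : E → E := fun x => x + (g x - g b - L (x - b)) • v with hΨ
  have hΨb : Ψ b = b := by simp [hΨ]
  have hLΨ : ∀ x, g x = g b + L (Ψ x - b) := fun x => by
    simp only [hΨ, map_add, map_sub, map_smul, hv, smul_eq_mul]
    ring
  have hgd : HasFDerivAt g L b := (hg.differentiableAt (hV.mem_nhds hb)).hasFDerivAt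
  have hΨ' : HasFDerivAt Ψ (ContinuousLinearEquiv.refl ℂ E : E →L[ℂ] E) b := by
    have := (hasFDerivAt_id b).add (((hgd.sub_const (g b)).sub
      (L.hasFDerivAt.comp b ((hasFDerivAt_id b).sub_const b))).smul_const v)
    convert! this using 1
    ext x
    simp
  have hΨd : DifferentiableOn ℂ Ψ V := by
    refine differentiableOn_id.add (((hg.sub_const _).sub ?_).smul_const v)
    exact (L.differentiable.comp (differentiable_id.sub_const b)).differentiableOn
  obtain ⟨Θ, W, hW, hbW, hΘ, hΘV, hinv, hΘb, hΘ'⟩ :=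
    exists_differentiableOn_rightInverse hV hΨd hb hΨ'
  rw [hΨb] at hbW hΘb hΘ'
  exact ⟨Θ, W, hW, hbW, hΘ, hΘV, LeftInvOn.injOn hinv, hΘb, hΘ',
    fun y hy => by rw [hLΨ (Θ y), hinv y hy]⟩

end Straightening

section InverseOfOpenInjection

variable {X Y : Type*} [TopologicalSpace X] [TopologicalSpace Y] [Nonempty X] {f : X → Y}
  {V : Set X} {x : X}

lemma tendsto_invFunOn_nhds (hinj : InjOn f V) (hV : V ∈ 𝓝 x) (hopen : 𝓝 (f x) ≤ map f (𝓝 x)) :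
    Tendsto (Function.invFunOn f V) (𝓝 (f x)) (𝓝 x) :=
  (tendsto_map'_iff.2 (tendsto_id.congr'
    (eventually_of_mem hV fun _ hy => (hinj.leftInvOn_invFunOn hy).symm))).mono_left hopen

lemma eventually_apply_invFunOn_eq (hV : V ∈ 𝓝 x) (hopen : 𝓝 (f x) ≤ map f (𝓝 x)) :
    ∀ᶠ y in 𝓝 (f x), f (Function.invFunOn f V y) = y :=
  eventually_of_mem (hopen (image_mem_map hV)) fun _ hy => Function.invFunOn_eq hy

end InverseOfOpenInjection

section OneVariable

variable {f : ℂ → ℂ} {V : Set ℂ}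

lemma not_eventually_eq_const_of_injOn {Y : Type*} {q : ℂ → Y} (hinj : InjOn q V) {a : ℂ}
    (ha : V ∈ 𝓝 a) : ¬ ∀ᶠ z in 𝓝 a, q z = q a := fun hconst => by
  have hall : ∀ᶠ z in 𝓝[≠] a, z = a := eventually_nhdsWithin_of_eventually_nhds <| by
    filter_upwards [hconst, ha] with z hz hzV using hinj hzV (mem_of_mem_nhds ha) hz
  obtain ⟨z, hz, hza⟩ := (hall.and eventually_mem_nhdsWithin).exists
  exact hza hz

lemma not_eventually_hasDerivAt_zero_of_injOn {F : Type*} [NormedAddCommGroup F] [NormedSpace ℂ F]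
    {q : ℂ → F} (hinj : InjOn q V) {a : ℂ} (ha : V ∈ 𝓝 a) : ¬ ∀ᶠ z in 𝓝 a, HasDerivAt q 0 z :=
  fun hderiv => by
  obtain ⟨r, hr, hball⟩ := Metric.mem_nhds_iff.1 hderiv
  refine not_eventually_eq_const_of_injOn hinj ha (eventually_of_mem (ball_mem_nhds a hr) ?_)
  exact fun z hz => isOpen_ball.is_const_of_deriv_eq_zero (convex_ball a r).isPreconnected
    (fun t ht => (hball ht).differentiableAt.differentiableWithinAt)
    (fun t ht => (hball ht).deriv) hz (mem_ball_self hr)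

lemma nhds_le_map_nhds_of_injOn (hV : IsOpen V) (hf : DifferentiableOn ℂ f V) (hinj : InjOn f V)
    {a : ℂ} (ha : a ∈ V) : 𝓝 (f a) ≤ map f (𝓝 a) :=
  (hf.analyticAt (hV.mem_nhds ha)).eventually_constant_or_nhds_le_map_nhds.resolve_left
    (not_eventually_eq_const_of_injOn hinj (hV.mem_nhds ha))

lemma eventually_deriv_ne_zero_of_injOn (hV : IsOpen V) (hf : DifferentiableOn ℂ f V)
    (hinj : InjOn f V) {a : ℂ} (ha : a ∈ V) : ∀ᶠ z in 𝓝[≠] a, deriv f z ≠ 0 := by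
  have hfa := hf.analyticAt (hV.mem_nhds ha)
  refine hfa.deriv.eventually_eq_zero_or_eventually_ne_zero.resolve_left fun hzero => ?_
  have htop : analyticOrderAt (fun z => f z - f a) a = ⊤ := by
    rw [← hfa.analyticOrderAt_deriv_add_one, analyticOrderAt_eq_top.2 hzero, top_add]
  exact not_eventually_eq_const_of_injOn hinj (hV.mem_nhds ha)
    ((analyticOrderAt_eq_top.1 htop).mono fun z => sub_eq_zero.1)

-- The inverse is continuous, and holomorphic off the isolated critical values; these singularities
-- are therefore removable, and the chain rule applies.
lemma deriv_ne_zero_of_injOn (hV : IsOpen V) (hf : DifferentiableOn ℂ f V) (hinj : InjOn f V)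
    {a : ℂ} (ha : a ∈ V) : deriv f a ≠ 0 := by
  set g := Function.invFunOn f V
  have hleft : ∀ z ∈ V, g (f z) = z := hinj.leftInvOn_invFunOn
  have hopen : ∀ z ∈ V, 𝓝 (f z) ≤ map f (𝓝 z) := fun z => nhds_le_map_nhds_of_injOn hV hf hinj
  have hg : ∀ z ∈ V, Tendsto g (𝓝 (f z)) (𝓝 z) := fun z hz =>
    tendsto_invFunOn_nhds hinj (hV.mem_nhds hz) (hopen z hz)
  have hright : ∀ z ∈ V, ∀ᶠ y in 𝓝 (f z), f (g y) = y := fun z hz =>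
    eventually_apply_invFunOn_eq (hV.mem_nhds hz) (hopen z hz)
  have hg_cont : ∀ z ∈ V, ContinuousAt g (f z) := fun z hz => by
    rw [ContinuousAt, hleft z hz]
    exact hg z hz
  have hg_diff : ∀ z ∈ V, deriv f z ≠ 0 → DifferentiableAt ℂ g (f z) := fun z hz hz' =>
    (HasDerivAt.of_local_left_inverse (hg_cont z hz) (by
      rw [hleft z hz]
      exact (hf.differentiableAt (hV.mem_nhds hz)).hasDerivAt) hz' (hright z hz)).differentiableAt
  have hg_punctured : ∀ᶠ y in 𝓝[≠] (f a), DifferentiableAt ℂ g y := by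
    have hcrit := eventually_nhdsWithin_iff.1 (eventually_deriv_ne_zero_of_injOn hV hf hinj ha)
    filter_upwards [eventually_nhdsWithin_of_eventually_nhds ((hg a ha).eventually
      (hcrit.and (hV.mem_nhds ha))), eventually_nhdsWithin_of_eventually_nhds (hright a ha),
      eventually_mem_nhdsWithin] with y hy hfy hya
    rw [← hfy]
    exact hg_diff _ hy.2 (hy.1 fun hga => hya (by rw [← hfy, hga]; rfl))
  have hga := (Complex.analyticAt_of_differentiable_on_punctured_nhds_of_continuousAt
    hg_punctured (hg_cont a ha)).differentiableAt.hasDerivAt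
  have hchain := hga.comp a (hf.differentiableAt (hV.mem_nhds ha)).hasDerivAt
  have hid : HasDerivAt (g ∘ f) 1 a := (hasDerivAt_id a).congr_of_eventuallyEq
    (eventually_of_mem (hV.mem_nhds ha) hleft)
  exact right_ne_zero_of_mul_eq_one (hchain.unique hid)

lemma exists_zero_of_norm_lt_of_le_norm_sphere {ρ m : ℝ} (hρ : 0 < ρ)
    (hf : DifferentiableOn ℂ f (closedBall 0 ρ)) (h0 : ‖f 0‖ < m)
    (hm : ∀ t ∈ sphere (0 : ℂ) ρ, m ≤ ‖f t‖) : ∃ t ∈ closedBall (0 : ℂ) ρ, f t = 0 := by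
  by_contra! hne
  have hmax : ‖(f 0)⁻¹‖ ≤ m⁻¹ := by
    refine Complex.norm_le_of_forall_mem_frontier_norm_le isBounded_ball
      ((hf.inv hne).mono closure_ball_subset_closedBall).diffContOnCl (fun t ht => ?_)
      (subset_closure (mem_ball_self hρ))
    rw [frontier_ball _ hρ.ne'] at ht
    rw [Pi.inv_apply, norm_inv]
    exact inv_anti₀ ((norm_nonneg _).trans_lt h0) (hm t ht)
  rw [norm_inv, inv_le_inv₀ (norm_pos_iff.2 (hne 0 (mem_closedBall_self hρ.le)))
    ((norm_nonneg _).trans_lt h0)] at hmax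
  exact h0.not_ge hmax

end OneVariable

section ZeroSets

variable {E : Type*} [NormedAddCommGroup E] [NormedSpace ℂ E] {g h : E → ℂ} {V : Set E} {c e : E}

lemma analyticAt_comp_add_smul (hV : IsOpen V) (hh : DifferentiableOn ℂ h V) (hc : c ∈ V) :
    AnalyticAt ℂ (fun t : ℂ => h (c + t • e)) 0 :=
  (differentiableOn_comp_add_smul hV hh fun _ ht => ht).analyticAt
    (eventually_add_smul_mem (hV.mem_nhds hc) e)

lemma eventually_eq_zero_of_forall_eventually_eq_zero_line (hV : IsOpen V)
    (hh : DifferentiableOn ℂ h V) (hc : c ∈ V)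
    (hline : ∀ e : E, ∀ᶠ t : ℂ in 𝓝 0, h (c + t • e) = 0) : ∀ᶠ x in 𝓝 c, h x = 0 := by
  obtain ⟨R, hR, hRV⟩ := Metric.mem_nhds_iff.1 (hV.mem_nhds hc)
  filter_upwards [ball_mem_nhds c (half_pos hR)] with x hx
  have hmem : ∀ t ∈ ball (0 : ℂ) 2, c + t • (x - c) ∈ V := fun t ht => hRV <| by
    rw [mem_ball_iff_norm] at hx
    rw [mem_ball_zero_iff] at ht
    rw [mem_ball_iff_norm, add_sub_cancel_left, norm_smul]
    nlinarith [norm_nonneg (x - c)]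
  have hzero := ((differentiableOn_comp_add_smul hV hh hmem).analyticOnNhd isOpen_ball
    ).eqOn_zero_of_preconnected_of_eventuallyEq_zero (convex_ball 0 2).isPreconnected
    (mem_ball_self two_pos) (hline (x - c)) (show (1 : ℂ) ∈ ball (0 : ℂ) 2 by simp)
  simpa using hzero

-- Differentiate `h` along `e` until the derivative stops vanishing on `Z`.
lemma exists_eqOn_zero_fderiv_ne_zero (hV : IsOpen V) {Z : Set E} (hZ : Z ⊆ V) (hc : c ∈ Z)
    (hh : DifferentiableOn ℂ h V) (hhZ : EqOn h 0 Z) {k : ℕ}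
    (hk : analyticOrderAt (fun t : ℂ => h (c + t • e)) 0 = k) :
    ∃ g : E → ℂ, DifferentiableOn ℂ g V ∧ EqOn g 0 Z ∧ ∃ b ∈ Z, fderiv ℂ g b e ≠ 0 := by
  induction k generalizing h with
  | zero =>
    refine absurd ?_ ((analyticAt_comp_add_smul hV hh (hZ hc)).analyticOrderAt_eq_zero.1 hk)
    simpa using hhZ hc
  | succ k ih =>
    by_cases hreg : ∃ b ∈ Z, fderiv ℂ h b e ≠ 0
    · exact ⟨h, hh, hhZ, hreg⟩
    push Not at hreg
    refine ih (differentiableOn_fderiv_apply hV hh e) hreg ?_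
    have hderiv : deriv (fun t : ℂ => h (c + t • e)) =ᶠ[𝓝 0]
        fun t => fderiv ℂ h (c + t • e) e := by
      filter_upwards [eventually_add_smul_mem (hV.mem_nhds (hZ hc)) e] with t ht
      exact (hasDerivAt_comp_add_smul (hh.differentiableAt (hV.mem_nhds ht))).deriv
    have hsucc := (analyticAt_comp_add_smul (e := e) hV hh (hZ hc)).analyticOrderAt_deriv_add_one
    have hhc : h c = 0 := hhZ hc
    rw [analyticOrderAt_congr hderiv] at hsucc
    simp only [zero_smul, add_zero, hhc, sub_zero, hk, Nat.cast_add, Nat.cast_one] at hsucc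
    exact WithTop.add_right_cancel ENat.one_ne_top hsucc

lemma eventually_exists_zero_add_smul (hV : IsOpen V) (hh : DifferentiableOn ℂ h V) (hc : c ∈ V)
    (hhc : h c = 0) (hline : ∀ᶠ t : ℂ in 𝓝[≠] 0, h (c + t • e) ≠ 0) {T : Set ℂ} (hT : T ∈ 𝓝 0) :
    ∀ᶠ x in 𝓝 c, ∃ t ∈ T, x + t • e ∈ V ∧ h (x + t • e) = 0 := by
  obtain ⟨ρ, hρ, hρT⟩ := nhds_basis_closedBall.mem_iff.1
    (inter_mem hT ((eventually_add_smul_mem (hV.mem_nhds hc) e).and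
      (eventually_nhdsWithin_iff.1 hline)))
  obtain ⟨m, hm, hmin⟩ : ∃ m, 0 < m ∧ ∀ t ∈ sphere (0 : ℂ) ρ, m ≤ ‖h (c + t • e)‖ := by
    refine (isCompact_sphere (0 : ℂ) ρ).exists_forall_le' ?_ fun t ht => ?_
    · exact (differentiableOn_comp_add_smul hV hh fun t ht =>
        (hρT (sphere_subset_closedBall ht)).2.1).continuousOn.norm
    · exact norm_pos_iff.2 ((hρT (sphere_subset_closedBall ht)).2.2 (ne_of_mem_sphere ht hρ.ne'))
  have hopen : IsOpen (V ∩ (fun x => ‖h x‖) ⁻¹' Ioi (m / 2)) :=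
    hh.continuousOn.norm.isOpen_inter_preimage hV isOpen_Ioi
  have hsmall : ∀ᶠ x in 𝓝 c, ‖h x‖ < m / 2 :=
    (hh.continuousOn.continuousAt (hV.mem_nhds hc)).norm.eventually_lt continuousAt_const
      (by simpa [hhc] using hm)
  filter_upwards [hsmall, eventually_forall_add_smul_mem hV (isCompact_closedBall 0 ρ)
    fun t ht => (hρT ht).2.1, eventually_forall_add_smul_mem hopen (isCompact_sphere 0 ρ)
    fun t ht => ⟨(hρT (sphere_subset_closedBall ht)).2.1,
      (half_lt_self hm).trans_le (hmin t ht)⟩] with x hx hball hsphere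
  obtain ⟨t, ht, hzero⟩ := exists_zero_of_norm_lt_of_le_norm_sphere hρ
    (differentiableOn_comp_add_smul hV hh hball) (by simpa using hx) fun t ht => (hsphere t ht).2.le
  exact ⟨t, (hρT ht).1, hball t ht, hzero⟩

lemma exists_mem_nhds_eventually_injective_add_smul {L : E →L[ℂ] ℂ} (hg : HasStrictFDerivAt g L c)
    (he : L e ≠ 0) : ∃ T ∈ 𝓝 (0 : ℂ), ∀ᶠ x in 𝓝 c, ∀ t ∈ T, g (x + t • e) = g x → t = 0 := by
  obtain ⟨κ, hκ, hκe⟩ := exists_pos_mul_lt (norm_pos_iff.2 he) ‖e‖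
  have hlim : Tendsto (fun p : E × ℂ => (p.1 + p.2 • e, p.1)) (𝓝 c ×ˢ 𝓝 0) (𝓝 (c, c)) := by
    rw [← nhds_prod_eq]
    exact (by fun_prop : Continuous fun p : E × ℂ => (p.1 + p.2 • e, p.1)).tendsto' _ _ (by simp)
  obtain ⟨O, hO, T, hT, hOT⟩ := mem_prod_iff.1 (hlim.eventually (hg.isLittleO.def hκ))
  refine ⟨T, hT, eventually_of_mem hO fun x hx t ht hgx => ?_⟩
  have hbound : ‖t‖ * ‖L e‖ ≤ ‖t‖ * (‖e‖ * κ) := by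
    have := hOT (mk_mem_prod hx ht)
    simp only [mem_ofPred_eq, hgx, add_sub_cancel_left, sub_self, zero_sub, norm_neg, map_smul,
      norm_smul] at this
    linarith
  by_contra ht0
  exact hκe.not_ge (le_of_mul_le_mul_left hbound (norm_pos_iff.2 ht0))

lemma eventually_eq_zero_imp_eq_zero (hV : IsOpen V) (hh : DifferentiableOn ℂ h V)
    (hg : DifferentiableOn ℂ g V) (hgh : ∀ x ∈ V, h x = 0 → g x = 0) (hc : c ∈ V) (hhc : h c = 0)
    (he : fderiv ℂ g c e ≠ 0) : ∀ᶠ x in 𝓝 c, g x = 0 → h x = 0 := by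
  have hline : ∀ᶠ t : ℂ in 𝓝[≠] 0, h (c + t • e) ≠ 0 := by
    refine (analyticAt_comp_add_smul hV hh hc).eventually_eq_zero_or_eventually_ne_zero.resolve_left
      fun hzero => he ?_
    have hgzero : (fun t : ℂ => g (c + t • e)) =ᶠ[𝓝 0] fun _ => 0 := by
      filter_upwards [hzero, eventually_add_smul_mem (hV.mem_nhds hc) e] with t ht htV
      exact hgh _ htV ht
    have hderiv := (hasDerivAt_comp_add_smul (v := e) (t := 0)
      (by simpa using hg.differentiableAt (hV.mem_nhds hc))).deriv
    rw [hgzero.deriv_eq, deriv_const, zero_smul, add_zero] at hderiv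
    exact hderiv.symm
  obtain ⟨T, hT, hinj⟩ := exists_mem_nhds_eventually_injective_add_smul
    (hasStrictFDerivAt_of_differentiableOn hV hg hc) he
  filter_upwards [hinj, eventually_exists_zero_add_smul hV hh hc hhc hline hT] with x hx hzero hgx
  obtain ⟨t, htT, htV, ht⟩ := hzero
  have ht0 : t = 0 := hx t htT ((hgh _ htV ht).trans hgx.symm)
  simpa [ht0] using ht

lemma exists_regular_eventually_eq_zero_imp_eq_zero (hV : IsOpen V) (hh : DifferentiableOn ℂ h V)
    (hc : c ∈ V) (hhc : h c = 0) (hne : ¬ ∀ᶠ x in 𝓝 c, h x = 0) :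
    ∃ b ∈ V, ∃ g : E → ℂ, DifferentiableOn ℂ g V ∧ g b = 0 ∧ fderiv ℂ g b ≠ 0 ∧
      ∀ᶠ x in 𝓝 b, g x = 0 → h x = 0 := by
  obtain ⟨e, he⟩ : ∃ e : E, ¬ ∀ᶠ t : ℂ in 𝓝 0, h (c + t • e) = 0 := by
    contrapose! hne
    exact eventually_eq_zero_of_forall_eventually_eq_zero_line hV hh hc hne
  obtain ⟨k, hk⟩ := ENat.ne_top_iff_exists.1 (mt analyticOrderAt_eq_top.1 he)
  obtain ⟨g, hg, hgZ, b, ⟨hbV, hhb⟩, hgb⟩ :=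
    exists_eqOn_zero_fderiv_ne_zero (Z := {x ∈ V | h x = 0}) hV (fun x hx => hx.1) ⟨hc, hhc⟩ hh
      (fun x hx => hx.2) hk.symm
  exact ⟨b, hbV, g, hg, hgZ ⟨hbV, hhb⟩, fun h0 => hgb (by simp [h0]),
    eventually_eq_zero_imp_eq_zero hV hh hg (fun x hx hhx => hgZ ⟨hx, hhx⟩) hbV hhb hgb⟩

end ZeroSets

section Osgood

universe u v

section CompleteSource

variable {E F : Type*} [NormedAddCommGroup E] [NormedSpace ℂ E] [CompleteSpace E]
  [NormedAddCommGroup F] [NormedSpace ℂ F] {f : E → F} {V : Set E}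

lemma not_injOn_of_fderiv_eq_zero_on_hypersurface (hV : IsOpen V) (hf : DifferentiableOn ℂ f V)
    {g : E → ℂ} (hg : DifferentiableOn ℂ g V) {b : E} (hb : b ∈ V) (hgb : g b = 0)
    (hg' : fderiv ℂ g b ≠ 0) {v : E} (hv : v ≠ 0) (hgv : fderiv ℂ g b v = 0)
    (hf' : ∀ᶠ x in 𝓝 b, g x = 0 → fderiv ℂ f x = 0) : ¬ InjOn f V := fun hinj => by
  obtain ⟨Θ, W, hW, hbW, hΘ, hΘV, hΘinj, hΘb, -, hgΘ⟩ := exists_chart_straightening hV hg hb hg'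
  have hline := eventually_add_smul_mem (hW.mem_nhds hbW) v
  refine not_eventually_hasDerivAt_zero_of_injOn (q := fun t => f (Θ (b + t • v)))
    (V := {t : ℂ | b + t • v ∈ W}) (fun s hs t ht hst => ?_) hline ?_
  · have := hΘinj hs ht (hinj (hΘV hs) (hΘV ht) hst)
    exact smul_left_injective ℂ hv (add_left_cancel this)
  · have hΘ_tendsto : Tendsto Θ (𝓝 b) (𝓝 b) := by
      simpa only [hΘb] using (hΘ.differentiableAt (hW.mem_nhds hbW)).continuousAt.tendsto
    filter_upwards [hline, eventually_add_smul_mem (hΘ_tendsto.eventually hf') v] with t ht hft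
    have hgt : g (Θ (b + t • v)) = 0 := by
      rw [hgΘ _ ht, hgb, add_sub_cancel_left, map_smul, hgv, smul_zero, add_zero]
    have hfd := (hf.differentiableAt (hV.mem_nhds (hΘV ht))).hasFDerivAt
    rw [hft hgt] at hfd
    exact hfd.comp_hasDerivAt t
      (hasDerivAt_comp_add_smul (hΘ.differentiableAt (hW.mem_nhds ht)))

-- `φ` is the restriction of `f` to a straightened level set of `l ∘ f`.
lemma exists_injOn_ker_of_fderiv_ne_zero (hV : IsOpen V) (hf : DifferentiableOn ℂ f V)
    (hinj : InjOn f V) {a : E} (ha : a ∈ V) (hfa : fderiv ℂ f a ≠ 0) :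
    ∃ (L : E →L[ℂ] ℂ) (l : F →L[ℂ] ℂ) (φ : L.ker → l.ker) (W : Set L.ker), L ≠ 0 ∧ l ≠ 0 ∧
      IsOpen W ∧ 0 ∈ W ∧ DifferentiableOn ℂ φ W ∧ InjOn φ W ∧
      (Function.Injective (fderiv ℂ φ 0) → Function.Injective (fderiv ℂ f a)) := by
  obtain ⟨v, hv⟩ := DFunLike.ne_iff.1 hfa
  obtain ⟨l, hl⟩ := SeparatingDual.exists_ne_zero (R := ℂ) hv
  have hfd := (hf.differentiableAt (hV.mem_nhds ha)).hasFDerivAt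
  set L := l ∘L fderiv ℂ f a with hL
  have hL0 : L ≠ 0 := fun h0 => hl (DFunLike.congr_fun h0 v)
  have hlf : fderiv ℂ (l ∘ f) a = L := (l.hasFDerivAt.comp a hfd).fderiv
  obtain ⟨Θ, W, hW, haW, hΘ, hΘV, hΘinj, hΘa, hΘ', hlΘ⟩ := exists_chart_straightening hV
    (l.differentiable.comp_differentiableOn hf) ha (hlf ▸ hL0)
  set ι : L.ker → E := fun y => a + y
  have hι : Differentiable ℂ ι := L.ker.subtypeL.differentiable.const_add a
  have hι0 : HasFDerivAt ι L.ker.subtypeL 0 := L.ker.subtypeL.hasFDerivAt.const_add a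
  have hι_zero : ι 0 = a := add_zero a
  set ψ : L.ker → F := fun y => f (Θ (ι y)) - f a with hψ
  obtain ⟨φ, hφ, hφψ⟩ := exists_differentiableOn_ker_coe_eq (f := ψ) (V := ι ⁻¹' W) (l := l)
    ((hf.comp (hΘ.comp hι.differentiableOn fun y hy => hy) fun y hy => hΘV hy).sub_const (f a))
    fun y hy => by
      have hy0 : L y = 0 := y.2
      simpa [hψ, hlf, ι, hy0, sub_eq_zero] using hlΘ _ hy
  have hWι : IsOpen (ι ⁻¹' W) := hW.preimage hι.continuous
  have h0W : (0 : L.ker) ∈ ι ⁻¹' W := by rwa [mem_preimage, hι_zero]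
  have hφ' : l.ker.subtypeL ∘L fderiv ℂ φ 0 = fderiv ℂ f a ∘L L.ker.subtypeL := by
    have hcoe := l.ker.subtypeL.hasFDerivAt.comp 0
      (hφ.differentiableAt (hWι.mem_nhds h0W)).hasFDerivAt
    rw [← hι_zero] at hΘ'
    have hfd : HasFDerivAt f (fderiv ℂ f a) (Θ (ι 0)) := by rwa [hι_zero, hΘa]
    refine hcoe.unique (((hfd.comp 0 (hΘ'.comp 0 hι0)).sub_const (f a)).congr_of_eventuallyEq ?_)
    exact eventually_of_mem (hWι.mem_nhds h0W) hφψ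
  refine ⟨L, l, φ, ι ⁻¹' W, hL0, fun h0 => hl (DFunLike.congr_fun h0 _), hWι, h0W, hφ,
    fun y hy z hz hyz => ?_, fun hinj' => (injective_iff_map_eq_zero _).2 fun x hx => ?_⟩
  · have hψyz : ψ y = ψ z := by rw [← hφψ y hy, ← hφψ z hz, hyz]
    exact Subtype.ext (add_left_cancel
      (hΘinj hy hz (hinj (hΘV hy) (hΘV hz) (sub_left_injective hψyz))))
  · have hxL : x ∈ L.ker := by simp [hL, hx]
    have hφx : fderiv ℂ φ 0 ⟨x, hxL⟩ = 0 := by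
      simpa [hx] using DFunLike.congr_fun hφ' ⟨x, hxL⟩
    exact congrArg Subtype.val ((injective_iff_map_eq_zero _).1 hinj' _ hφx)

end CompleteSource

lemma injOn_comp_add_smul {E Y : Type*} [AddCommGroup E] [Module ℂ E] {f : E → Y} {V : Set E}
    (hinj : InjOn f V) (a : E) {v : E} (hv : v ≠ 0) :
    InjOn (fun t : ℂ => f (a + t • v)) {t | a + t • v ∈ V} := fun _ hs _ ht hst =>
  smul_left_injective ℂ hv (add_left_cancel (hinj hs ht hst))

section FiniteDimensional

variable {E F : Type*} [NormedAddCommGroup E] [NormedSpace ℂ E] [NormedAddCommGroup F]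
  [NormedSpace ℂ F] {f : E → F} {V : Set E}

lemma fderiv_ne_zero_of_injOn_of_finrank_eq_one [Nontrivial E] (hF : Module.finrank ℂ F = 1)
    (hV : IsOpen V) (hf : DifferentiableOn ℂ f V) (hinj : InjOn f V) {a : E} (ha : a ∈ V) :
    fderiv ℂ f a ≠ 0 := fun h0 => by
  have := FiniteDimensional.of_finrank_eq_succ hF
  obtain ⟨e, he⟩ := exists_ne (0 : E)
  have L : F ≃L[ℂ] ℂ := ContinuousLinearEquiv.ofFinrankEq (by simpa using hF)
  refine deriv_ne_zero_of_injOn (f := fun t => L (f (a + t • e))) (a := 0)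
    (hV.preimage (by fun_prop : Continuous fun t : ℂ => a + t • e))
    (L.differentiable.comp_differentiableOn (differentiableOn_comp_add_smul hV hf fun t ht => ht))
    (L.injective.comp_injOn (injOn_comp_add_smul hinj a he)) (by simpa using ha) ?_
  have hslice := hasDerivAt_comp_add_smul (f := f) (x := a) (v := e) (t := 0)
    (by simpa using hf.differentiableAt (hV.mem_nhds ha))
  exact (L.hasFDerivAt.comp_hasDerivAt (0 : ℂ) hslice).deriv.trans (by simp [h0])

variable [FiniteDimensional ℂ E]

lemma differentiableOn_det {A : F → E →L[ℂ] E} {W : Set F}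
    (hA : ∀ v, DifferentiableOn ℂ (fun x => A x v) W) :
    DifferentiableOn ℂ (fun x => (A x).det) W := by
  let b := Module.finBasis ℂ E
  have hentry : ∀ i j, DifferentiableOn ℂ (fun x => LinearMap.toMatrix b b (A x) i j) W :=
    fun i j => by
      simp only [LinearMap.toMatrix_apply]
      exact (LinearMap.toContinuousLinearMap (b.coord i)).differentiable.comp_differentiableOn
        (hA (b j))
  have hdet : (fun x => (A x).det) = fun x => (LinearMap.toMatrix b b (A x)).det :=
    funext fun x => (LinearMap.det_toMatrix b _).symm
  simp only [hdet, Matrix.det_apply]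
  exact DifferentiableOn.fun_sum fun σ _ => DifferentiableOn.const_smul (fun x hx =>
    (HasFDerivWithinAt.finsetProd fun i _ =>
      (hentry (σ i) i x hx).hasFDerivWithinAt).differentiableWithinAt) _

lemma exists_ne_zero_apply_eq_zero (hE : 2 ≤ Module.finrank ℂ E) (L : E →L[ℂ] ℂ) :
    ∃ v ≠ 0, L v = 0 := by
  obtain ⟨v, hv, hv0⟩ := (L : E →ₗ[ℂ] ℂ).ker.exists_mem_ne_zero_of_ne_bot
    (LinearMap.ker_ne_bot_of_finrank_lt (by rw [Module.finrank_self]; lia))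
  exact ⟨v, hv0, hv⟩

-- Near a regular point of its zero set, `det f' = 0` cuts out a hypersurface on which `f' = 0`, so
-- that `f` is locally constant on it.
lemma fderiv_ne_zero_of_injOn_of_two_le_finrank (hE : 2 ≤ Module.finrank ℂ E) {f : E → E}
    (hV : IsOpen V) (hf : DifferentiableOn ℂ f V) (hinj : InjOn f V)
    (hdich : ∀ x ∈ V, fderiv ℂ f x ≠ 0 → Function.Injective (fderiv ℂ f x)) {a : E} (ha : a ∈ V) :
    fderiv ℂ f a ≠ 0 := fun h0 => by
  have := FiniteDimensional.complete ℂ E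
  have : Nontrivial E := Module.nontrivial_of_finrank_pos (R := ℂ) (by lia)
  set h : E → ℂ := fun x => (fderiv ℂ f x).det
  have hh : DifferentiableOn ℂ h V := differentiableOn_det (differentiableOn_fderiv_apply hV hf)
  have hzero : ∀ x ∈ V, h x = 0 → fderiv ℂ f x = 0 := fun x hx hhx => by
    by_contra hne
    exact (LinearMap.bot_lt_ker_of_det_eq_zero hhx).ne' (LinearMap.ker_eq_bot.2 (hdich x hx hne))
  have hne : ¬ ∀ᶠ x in 𝓝 a, h x = 0 := fun hev => by
    obtain ⟨e, he⟩ := exists_ne (0 : E)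
    refine not_eventually_hasDerivAt_zero_of_injOn (injOn_comp_add_smul hinj a he)
      (eventually_add_smul_mem (hV.mem_nhds ha) e) ?_
    filter_upwards [eventually_add_smul_mem (inter_mem (hV.mem_nhds ha) hev) e] with t ht
    simpa [hzero _ ht.1 ht.2] using
      hasDerivAt_comp_add_smul (v := e) (hf.differentiableAt (hV.mem_nhds ht.1))
  obtain ⟨b, hb, g, hg, hgb, hg', hgh⟩ := exists_regular_eventually_eq_zero_imp_eq_zero hV hh ha
    (by simp [h, h0, ContinuousLinearMap.det]) hne
  obtain ⟨v, hv, hgv⟩ := exists_ne_zero_apply_eq_zero hE (fderiv ℂ g b)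
  refine not_injOn_of_fderiv_eq_zero_on_hypersurface hV hf hg hb hgb hg' hv hgv ?_ hinj
  filter_upwards [hgh, hV.mem_nhds hb] with x hx hxV hgx using hzero x hxV (hx hgx)

end FiniteDimensional

lemma finrank_ker_eq {E : Type*} [NormedAddCommGroup E] [NormedSpace ℂ E] [FiniteDimensional ℂ E]
    {L : E →L[ℂ] ℂ} (hL : L ≠ 0) {n : ℕ} (hE : Module.finrank ℂ E = n + 1) :
    Module.finrank ℂ L.ker = n := by
  have := Module.Dual.finrank_ker_add_one_of_ne_zero (f := (L : E →ₗ[ℂ] ℂ))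
    fun h0 => hL (ContinuousLinearMap.coe_injective h0)
  exact Nat.succ_injective (this.trans hE)

theorem injective_fderiv_of_injOn_of_finrank_eq (n : ℕ) {E : Type u} {F : Type v}
    [NormedAddCommGroup E] [NormedSpace ℂ E] [FiniteDimensional ℂ E]
    [NormedAddCommGroup F] [NormedSpace ℂ F] [FiniteDimensional ℂ F]
    (hE : Module.finrank ℂ E = n) (hF : Module.finrank ℂ F = n) {V : Set E} {f : E → F}
    (hV : IsOpen V) (hf : DifferentiableOn ℂ f V) (hinj : InjOn f V) {a : E} (ha : a ∈ V) :
    Function.Injective (fderiv ℂ f a) := by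
  induction n generalizing E F with
  | zero =>
    have : Subsingleton E := Module.finrank_zero_iff.1 hE
    exact Function.injective_of_subsingleton _
  | succ n ih =>
    have := FiniteDimensional.complete ℂ E
    have hdich : ∀ x ∈ V, fderiv ℂ f x ≠ 0 → Function.Injective (fderiv ℂ f x) := fun x hx hne => by
      obtain ⟨L, l, φ, W, hL, hl, hW, h0W, hφ, hφinj, himp⟩ :=
        exists_injOn_ker_of_fderiv_ne_zero hV hf hinj hx hne
      exact himp (ih (finrank_ker_eq hL hE) (finrank_ker_eq hl hF) hW hφ hφinj h0W)
    refine hdich a ha ?_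
    rcases Nat.eq_zero_or_pos n with rfl | hn
    · have : Nontrivial E := Module.nontrivial_of_finrank_pos (R := ℂ) (by lia)
      exact fderiv_ne_zero_of_injOn_of_finrank_eq_one hF hV hf hinj ha
    · let T : F ≃L[ℂ] E := ContinuousLinearEquiv.ofFinrankEq (hF.trans hE.symm)
      have hT : ∀ x, fderiv ℂ (T ∘ f) x = (T : F →L[ℂ] E) ∘L fderiv ℂ f x := fun x => T.comp_fderiv
      have hne := fderiv_ne_zero_of_injOn_of_two_le_finrank (by lia) hV
        (T.differentiable.comp_differentiableOn hf) (T.injective.comp_injOn hinj)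
        (fun x hx hTx => by
          rw [hT] at hTx ⊢
          exact T.injective.comp (hdich x hx fun h0 => hTx (by simp [h0]))) ha
      exact fun h0 => hne (by simp [hT, h0])

end Osgood

section InverseOfInjection

variable {E F : Type*} [NormedAddCommGroup E] [NormedSpace ℂ E] [FiniteDimensional ℂ E]
  [NormedAddCommGroup F] [NormedSpace ℂ F] [FiniteDimensional ℂ F] {f : E → F} {V : Set E}

theorem exists_hasStrictFDerivAt_equiv_of_injOn
    (hEF : Module.finrank ℂ E = Module.finrank ℂ F) (hV : IsOpen V) (hf : DifferentiableOn ℂ f V)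
    (hinj : InjOn f V) {a : E} (ha : a ∈ V) :
    ∃ A : E ≃L[ℂ] F, HasStrictFDerivAt f (A : E →L[ℂ] F) a := by
  have := FiniteDimensional.complete ℂ F
  have hf' := injective_fderiv_of_injOn_of_finrank_eq _ hEF rfl hV hf hinj ha
  exact ⟨(LinearEquiv.ofInjectiveOfFinrankEq _ hf' hEF).toContinuousLinearEquiv,
    hasStrictFDerivAt_of_differentiableOn hV hf ha⟩

theorem map_nhds_eq_of_injOn (hEF : Module.finrank ℂ E = Module.finrank ℂ F) (hV : IsOpen V)
    (hf : DifferentiableOn ℂ f V) (hinj : InjOn f V) {a : E} (ha : a ∈ V) :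
    map f (𝓝 a) = 𝓝 (f a) := by
  have := FiniteDimensional.complete ℂ E
  obtain ⟨A, hA⟩ := exists_hasStrictFDerivAt_equiv_of_injOn hEF hV hf hinj ha
  exact hA.map_nhds_eq_of_equiv

theorem differentiableOn_invFunOn [Nonempty E] (hEF : Module.finrank ℂ E = Module.finrank ℂ F)
    (hV : IsOpen V) (hf : DifferentiableOn ℂ f V) (hinj : InjOn f V) :
    DifferentiableOn ℂ (Function.invFunOn f V) (f '' V) := by
  rintro _ ⟨a, ha, rfl⟩
  obtain ⟨A, hA⟩ := exists_hasStrictFDerivAt_equiv_of_injOn hEF hV hf hinj ha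
  have hopen := (map_nhds_eq_of_injOn hEF hV hf hinj ha).ge
  have hVa := hV.mem_nhds ha
  refine (HasFDerivAt.of_local_left_inverse (f' := A) ?_ ?_
    (eventually_apply_invFunOn_eq hVa hopen)).differentiableAt.differentiableWithinAt
  · simpa [ContinuousAt, hinj.leftInvOn_invFunOn ha] using tendsto_invFunOn_nhds hinj hVa hopen
  · simpa [hinj.leftInvOn_invFunOn ha] using hA.hasFDerivAt

end InverseOfInjection

lemma exists_eq_add_and_forall_le_add {X : Type*} [TopologicalSpace X] {K : Set X}
    (hK : IsCompact K) {v : X → EReal} (hv : UpperSemicontinuousOn v K) (hv_top : ∀ x ∈ K, v x ≠ ⊤)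
    {ψ : X → ℝ} (hψ : ContinuousOn ψ K) {a : X} (ha : a ∈ K) {c : ℝ}
    (hc : ((ψ a + c : ℝ) : EReal) ≤ v a) :
    ∃ x ∈ K, ∃ c' ≥ c, v x = ((ψ x + c' : ℝ) : EReal) ∧
      ∀ y ∈ K, v y ≤ ((ψ y + c' : ℝ) : EReal) := by
  have hdiff : UpperSemicontinuousOn (fun x => v x + ((-ψ x : ℝ) : EReal)) K :=
    hv.add' (continuous_coe_real_ereal.comp_continuousOn hψ.neg).upperSemicontinuousOn fun x _ =>
      EReal.continuousAt_add (Or.inr (EReal.coe_ne_bot _)) (Or.inr (EReal.coe_ne_top _))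
  obtain ⟨x, hx, hmax⟩ := hdiff.exists_isMaxOn ⟨a, ha⟩ hK
  have hca : (c : EReal) ≤ v a + ((-ψ a : ℝ) : EReal) := by
    calc (c : EReal) = ((ψ a + c : ℝ) : EReal) + ((-ψ a : ℝ) : EReal) := by
          rw [← EReal.coe_add]; simp
      _ ≤ _ := by gcongr
  have hcx : (c : EReal) ≤ v x + ((-ψ x : ℝ) : EReal) := hca.trans (hmax ha)
  have hbot : v x ≠ ⊥ := fun h => by simp [h] at hcx
  obtain ⟨m, hm⟩ : ∃ m : ℝ, v x = m := ⟨_, (EReal.coe_toReal (hv_top x hx) hbot).symm⟩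
  refine ⟨x, hx, m - ψ x, ?_, by simpa using hm, fun y hy => ?_⟩
  · rw [hm, ← EReal.coe_add, EReal.coe_le_coe_iff] at hcx
    linarith
  · have hxy : v y + ((-ψ y : ℝ) : EReal) ≤ v x + ((-ψ x : ℝ) : EReal) := hmax hy
    rw [hm, ← EReal.coe_add] at hxy
    calc v y = v y + ((-ψ y : ℝ) : EReal) + (ψ y : EReal) := by
          rw [add_assoc, ← EReal.coe_add]; simp
      _ ≤ ((m + -ψ x : ℝ) : EReal) + (ψ y : EReal) := by gcongr
      _ = ((ψ y + (m - ψ x) : ℝ) : EReal) := by rw [← EReal.coe_add]; congr 1; ring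

lemma exists_forall_le_coe_of_upperSemicontinuousOn {X : Type*} [TopologicalSpace X] {K : Set X}
    (hK : IsCompact K) {v : X → EReal} (hv : UpperSemicontinuousOn v K)
    (hv_top : ∀ x ∈ K, v x ≠ ⊤) : ∃ A : ℝ, ∀ x ∈ K, v x ≤ (A : EReal) := by
  rcases K.eq_empty_or_nonempty with rfl | hne
  · exact ⟨0, fun x hx => hx.elim⟩
  obtain ⟨x, hx, hmax⟩ := hv.exists_isMaxOn hne hK
  obtain ⟨A, hA, -⟩ := EReal.lt_iff_exists_real_btwn.1 (hv_top x hx).lt_top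
  exact ⟨A, fun y hy => (hmax hy).trans hA.le⟩

section Plurisubharmonic

open InnerProductSpace

variable {n : ℕ} {D : Set (Cn n)} {u : Cn n → EReal}

lemma not_eventually_le_harmonic_sub_sq (hD : IsOpen D) (hu : PSHOn u D) {x b : Cn n} (hx : x ∈ D)
    {H : ℂ → ℝ} {ζ₀ : ℂ} (hH : HarmonicAt H ζ₀) (hux : u x = (H ζ₀ : ℝ)) {ε : ℝ} (hε : 0 < ε) :
    ¬ ∀ᶠ ζ in 𝓝 ζ₀, u (x + (ζ - ζ₀) • b) ≤ ((H ζ - ε * ‖ζ - ζ₀‖ ^ 2 : ℝ) : EReal) := fun hle => by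
  have hDev : ∀ᶠ ζ in 𝓝 ζ₀, x + (ζ - ζ₀) • b ∈ D :=
    (by fun_prop : Continuous fun ζ : ℂ => x + (ζ - ζ₀) • b).continuousAt.preimage_mem_nhds
      (by simpa using hD.mem_nhds hx)
  obtain ⟨ρ, hρ, hball⟩ := nhds_basis_closedBall.mem_iff.1 ((hH.eventually.and hDev).and hle)
  have hcircle (θ : ℝ) : circleMap ζ₀ ρ θ ∈ closedBall ζ₀ ρ := circleMap_mem_closedBall ζ₀ hρ.le θ
  let G : ℂ → ℝ := H - fun _ => ε * ρ ^ 2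
  have hG : HarmonicOnNhd G (closedBall ζ₀ |ρ|) := fun ζ hζ =>
    (hball (abs_of_pos hρ ▸ hζ)).1.1.sub (harmonicAt_const _)
  have hmean := hu.2 x hx b ρ hρ
    (fun t ht => by simpa using (hball (a := ζ₀ + t) (by simpa using ht)).1.2)
    (fun θ => G (circleMap ζ₀ ρ θ))
    (hG.continuousOn.comp_continuous (continuous_circleMap ζ₀ ρ) fun θ =>
      (abs_of_pos hρ).symm ▸ hcircle θ)
    (fun θ => by simpa [G, circleMap, abs_of_pos hρ] using (hball (hcircle θ)).2)
  rw [one_div, ← smul_eq_mul, ← Real.circleAverage_def, hG.circleAverage_eq, hux,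
    EReal.coe_le_coe_iff] at hmean
  exact hmean.not_gt (sub_lt_self _ (by positivity))

lemma not_eventually_le_harmonic_sub_sq_add_sq (hD : IsOpen D) (hu : PSHOn u D) {φ : ℂ → Cn n}
    {ζ₀ : ℂ} {y₀ : Cn n} (hφ : AnalyticAt ℂ φ ζ₀) (hx : φ ζ₀ + y₀ ∈ D) {q : ℂ → ℝ}
    (hq : HarmonicAt q ζ₀) {δ κ : ℝ} (hδ : 0 < δ) (hκ : 0 ≤ κ)
    (hux : u (φ ζ₀ + y₀) = ((q ζ₀ - δ * ‖ζ₀‖ ^ 2 + κ * ‖y₀‖ ^ 2 : ℝ) : EReal)) :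
    ¬ ∀ᶠ p : ℂ × Cn n in 𝓝 (ζ₀, y₀),
      u (φ p.1 + p.2) ≤ ((q p.1 - δ * ‖p.1‖ ^ 2 + κ * ‖p.2‖ ^ 2 : ℝ) : EReal) := fun hle => by
  set b := deriv φ ζ₀
  let s : ℂ → Cn n := fun ζ => φ ζ₀ + (ζ - ζ₀) • b - φ ζ
  have hs : AnalyticAt ℂ s ζ₀ := by fun_prop
  have hs0 : s ζ₀ = 0 := by simp [s]
  have hs_small : ∀ᶠ ζ in 𝓝 ζ₀, κ * ‖s ζ‖ ^ 2 ≤ δ / 2 * ‖ζ - ζ₀‖ ^ 2 := by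
    have hτ : 0 < √(δ / 2 / (κ + 1)) := by positivity
    filter_upwards [hφ.differentiableAt.hasDerivAt.isLittleO.def hτ] with ζ hζ
    rw [← norm_neg] at hζ
    calc κ * ‖s ζ‖ ^ 2 = κ * ‖-(φ ζ - φ ζ₀ - (ζ - ζ₀) • b)‖ ^ 2 := by congr 3; simp only [s]; abel
      _ ≤ (κ + 1) * (√(δ / 2 / (κ + 1)) * ‖ζ - ζ₀‖) ^ 2 := by gcongr; linarith
      _ = δ / 2 * ‖ζ - ζ₀‖ ^ 2 := by
        rw [mul_pow, Real.sq_sqrt (by positivity)]; field_simp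
  let h : ℂ → ℝ := (fun ζ => ((2 * κ) • innerSL ℝ y₀) (s ζ)) -
    fun ζ => ((2 * δ) • innerSL ℝ ζ₀) (ζ - ζ₀)
  have hh : HarmonicAt h ζ₀ := (hs.harmonicAt.comp_CLM _).sub
    ((by fun_prop : AnalyticAt ℂ (fun ζ => ζ - ζ₀) ζ₀).harmonicAt.comp_CLM _)
  refine not_eventually_le_harmonic_sub_sq (b := b)
    (H := q + h + fun _ => κ * ‖y₀‖ ^ 2 - δ * ‖ζ₀‖ ^ 2) hD hu hx
    ((hq.add hh).add (harmonicAt_const _))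
    (hux.trans (congrArg _ (by simp [h, hs0]; ring))) (half_pos hδ) ?_
  have hp : ContinuousAt (fun ζ => (ζ, y₀ + s ζ)) ζ₀ :=
    continuousAt_id.prodMk (hs.continuousAt.const_add y₀)
  rw [ContinuousAt, hs0, add_zero] at hp
  filter_upwards [hp.eventually hle, hs_small] with ζ hζ hsζ
  have hpoint : φ ζ + (y₀ + s ζ) = φ ζ₀ + y₀ + (ζ - ζ₀) • b := by simp only [s]; abel
  refine (hpoint ▸ hζ).trans (EReal.coe_le_coe_iff.2 ?_)
  have hζ_sq := norm_add_sq_real ζ₀ (ζ - ζ₀)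
  have hy_sq := norm_add_sq_real y₀ (s ζ)
  rw [add_sub_cancel] at hζ_sq
  simp only [h, hζ_sq, hy_sq, Complex.inner, Complex.mul_re, Complex.sub_re, Complex.conj_re,
    Complex.sub_im, Complex.conj_im, mul_neg, sub_neg_eq_add, smul_apply, coe_innerSL_apply,
    smul_eq_mul, Pi.add_apply, Pi.sub_apply]
  linarith

lemma eventually_forall_add_mem_and_le_add (hD : IsOpen D) (hu : UpperSemicontinuousOn u D)
    {K : Set ℂ} (hK : IsCompact K) {φ : ℂ → Cn n} (hφ : ∀ ζ ∈ K, ContinuousAt φ ζ)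
    (hφD : MapsTo φ K D) {G : Set ℂ} (hG : IsOpen G) {q : ℂ → ℝ} (hq : ContinuousOn q K)
    (hle : ∀ ζ ∈ K \ G, u (φ ζ) ≤ (q ζ : EReal)) {ε : ℝ} (hε : 0 < ε) :
    ∀ᶠ y in 𝓝 (0 : Cn n), ∀ ζ ∈ K,
      φ ζ + y ∈ D ∧ (ζ ∉ G → u (φ ζ + y) ≤ ((q ζ + ε : ℝ) : EReal)) := by
  suffices h : ∀ ζ ∈ K, ∀ᶠ p : Cn n × ℂ in 𝓝 (0, ζ), p.2 ∈ K →
      φ p.2 + p.1 ∈ D ∧ (p.2 ∉ G → u (φ p.2 + p.1) ≤ ((q p.2 + ε : ℝ) : EReal)) from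
    (hK.eventually_forall_of_forall_eventually (P := fun y ζ => ζ ∈ K →
      φ ζ + y ∈ D ∧ (ζ ∉ G → u (φ ζ + y) ≤ ((q ζ + ε : ℝ) : EReal))) h).mono
      fun y hy ζ hζ => hy ζ hζ hζ
  intro ζ hζ
  have hsnd : Tendsto Prod.snd (𝓝 ((0 : Cn n), ζ)) (𝓝 ζ) := continuous_snd.tendsto _
  have hadd : Tendsto (fun p : Cn n × ℂ => φ p.2 + p.1) (𝓝 (0, ζ)) (𝓝 (φ ζ)) := by
    simpa using ((hφ ζ hζ).tendsto.comp hsnd).add (continuous_fst.tendsto ((0 : Cn n), ζ))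
  have hDev := hadd.eventually (hD.mem_nhds (hφD hζ))
  by_cases hζG : ζ ∈ G
  · filter_upwards [hDev, hsnd.eventually (hG.mem_nhds hζG)] with p hpD hpG _
    exact ⟨hpD, fun h => absurd hpG h⟩
  · have hlt : u (φ ζ) < ((q ζ + ε / 2 : ℝ) : EReal) := (hle ζ ⟨hζ, hζG⟩).trans_lt
      (EReal.coe_lt_coe_iff.2 (lt_add_of_pos_right _ (half_pos hε)))
    have hu_lt := hadd.eventually (eventually_nhdsWithin_iff.1 (hu (φ ζ) (hφD hζ) _ hlt))
    have hq_gt := hsnd.eventually (eventually_nhdsWithin_iff.1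
      ((hq ζ hζ).eventually_const_lt (sub_lt_self (q ζ) (half_pos hε))))
    filter_upwards [hDev, hu_lt, hq_gt] with p hpD hpu hpq hpK
    exact ⟨hpD, fun _ => (hpu hpD).le.trans (EReal.coe_le_coe_iff.2 (by linarith [hpq hpK]))⟩

lemma upperSemicontinuousOn_comp_add (hu : UpperSemicontinuousOn u D) {K : Set ℂ}
    {φ : ℂ → Cn n} (hφ : ContinuousOn φ K) {B : Set (Cn n)}
    (hKB : ∀ ζ ∈ K, ∀ y ∈ B, φ ζ + y ∈ D) :
    UpperSemicontinuousOn (fun p : ℂ × Cn n => u (φ p.1 + p.2)) (K ×ˢ B) :=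
  hu.comp ((hφ.comp continuousOn_fst fun _ hp => hp.1).add continuousOn_snd)
    fun p hp => hKB p.1 hp.1 p.2 hp.2

-- The translation variable `y` lets the submean property, known only on complex lines, be used
-- along the curved disc `φ`: at an interior maximum of `u (φ ζ + y) - q ζ + δ ‖ζ‖² - κ ‖y‖²` one
-- moves along the tangent line of the disc and pays the difference in `y`.
lemma lt_of_forall_edge_lt_sub_sq_add_sq (hD : IsOpen D) (hu : PSHOn u D) {K : Set ℂ}
    (hK : IsCompact K) {φ : ℂ → Cn n} (hφ : AnalyticOnNhd ℂ φ K) {η : ℝ} (hη : 0 ≤ η)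
    (hD_mem : ∀ ζ ∈ K, ∀ y ∈ closedBall (0 : Cn n) η, φ ζ + y ∈ D)
    (hu_top : ∀ x ∈ D, u x ≠ ⊤) {G : Set ℂ} (hG : IsOpen G) (hGK : G ⊆ K) {q : ℂ → ℝ}
    (hq : ContinuousOn q K) (hqG : HarmonicOnNhd q G) {δ κ : ℝ} (hδ : 0 < δ) (hκ : 0 ≤ κ) {c : ℝ}
    (hedge : ∀ ζ ∈ K, ∀ y ∈ closedBall (0 : Cn n) η, ζ ∉ G ∨ ‖y‖ = η →
      u (φ ζ + y) < ((q ζ - δ * ‖ζ‖ ^ 2 + κ * ‖y‖ ^ 2 + c : ℝ) : EReal)) {a : ℂ} (ha : a ∈ K) :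
    u (φ a) < ((q a - δ * ‖a‖ ^ 2 + c : ℝ) : EReal) := by
  by_contra! hge
  have hψ : ContinuousOn (fun p : ℂ × Cn n => q p.1 - δ * ‖p.1‖ ^ 2 + κ * ‖p.2‖ ^ 2)
      (K ×ˢ closedBall 0 η) :=
    ((hq.comp continuousOn_fst fun p hp => hp.1).sub (by fun_prop)).add (by fun_prop)
  obtain ⟨⟨ζ₀, y₀⟩, ⟨hζ₀, hy₀⟩, c', hc', heq, hmax⟩ := exists_eq_add_and_forall_le_add
    (hK.prod (isCompact_closedBall (0 : Cn n) η))
    (upperSemicontinuousOn_comp_add hu.1 hφ.continuousOn hD_mem)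
    (fun p hp => hu_top _ (hD_mem p.1 hp.1 p.2 hp.2)) hψ
    (a := (a, 0)) ⟨ha, by simpa using hη⟩ (c := c) (by simpa using hge)
  have hnot_edge : ¬ (ζ₀ ∉ G ∨ ‖y₀‖ = η) := fun h =>
    (heq.symm.trans_lt (hedge ζ₀ hζ₀ y₀ hy₀ h)).not_ge
      (EReal.coe_le_coe_iff.2 (add_le_add_right hc' _))
  obtain ⟨hζ₀G, hy₀η⟩ : ζ₀ ∈ G ∧ ‖y₀‖ ≠ η := by simpa using hnot_edge
  have hy₀_lt : y₀ ∈ ball 0 η := by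
    simpa using (mem_closedBall_zero_iff.1 hy₀).lt_of_ne hy₀η
  refine not_eventually_le_harmonic_sub_sq_add_sq hD hu (hφ ζ₀ hζ₀) (hD_mem ζ₀ hζ₀ y₀ hy₀)
    ((hqG ζ₀ hζ₀G).add (harmonicAt_const c')) hδ hκ
    (heq.trans (congrArg _ (by simp only [Pi.add_apply]; ring))) ?_
  filter_upwards [prod_mem_nhds (hG.mem_nhds hζ₀G) (isOpen_ball.mem_nhds hy₀_lt)] with p hp
  exact (hmax p ⟨hGK hp.1, ball_subset_closedBall hp.2⟩).trans_eq
    (congrArg _ (by simp only [Pi.add_apply]; ring))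

theorem le_of_forall_mem_diff_le_of_harmonicOnNhd (hD : IsOpen D) (hu : PSHOn u D)
    (hu_top : ∀ x ∈ D, u x ≠ ⊤) {K : Set ℂ} (hK : IsCompact K) {φ : ℂ → Cn n}
    (hφ : AnalyticOnNhd ℂ φ K) (hφD : MapsTo φ K D) {G : Set ℂ} (hG : IsOpen G) (hGK : G ⊆ K)
    {q : ℂ → ℝ} (hq : ContinuousOn q K) (hqG : HarmonicOnNhd q G)
    (hle : ∀ ζ ∈ K \ G, u (φ ζ) ≤ (q ζ : EReal)) {a : ℂ} (ha : a ∈ K) :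
    u (φ a) ≤ (q a : EReal) := by
  refine EReal.le_of_forall_lt_iff_le.1 fun c hc => ?_
  obtain ⟨ε, hε, rfl⟩ : ∃ ε > 0, c = q a + 3 * ε :=
    ⟨(c - q a) / 3, by have := EReal.coe_lt_coe_iff.1 hc; linarith, by ring⟩
  obtain ⟨η, hη, hnear⟩ := nhds_basis_closedBall.eventually_iff.1
    (eventually_forall_add_mem_and_le_add hD hu.1 hK (fun ζ hζ => (hφ ζ hζ).continuousAt) hφD hG hq
      hle hε)
  have hD_mem : ∀ ζ ∈ K, ∀ y ∈ closedBall (0 : Cn n) η, φ ζ + y ∈ D :=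
    fun ζ hζ y hy => (hnear hy ζ hζ).1
  obtain ⟨A, hA⟩ := exists_forall_le_coe_of_upperSemicontinuousOn
    (hK.prod (isCompact_closedBall (0 : Cn n) η))
    (upperSemicontinuousOn_comp_add hu.1 hφ.continuousOn hD_mem)
    fun p hp => hu_top _ (hD_mem p.1 hp.1 p.2 hp.2)
  obtain ⟨B, hB⟩ := hK.exists_bound_of_continuousOn hq
  obtain ⟨M, hM⟩ := hK.isBounded.exists_norm_le
  have hB0 : 0 ≤ B := (norm_nonneg _).trans (hB a ha)
  have hδK : ∀ ζ ∈ K, ε / (M ^ 2 + 1) * ‖ζ‖ ^ 2 ≤ ε := fun ζ hζ => by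
    have hζM : ‖ζ‖ ^ 2 ≤ M ^ 2 := by gcongr; exact hM ζ hζ
    rw [div_mul_eq_mul_div]
    exact div_le_of_le_mul₀ (by positivity) hε.le (by gcongr; linarith)
  have hlt := lt_of_forall_edge_lt_sub_sq_add_sq hD hu hK hφ hη.le hD_mem hu_top hG hGK hq
    hqG (δ := ε / (M ^ 2 + 1)) (κ := (|A| + B) / η ^ 2) (c := 3 * ε)
    (by positivity) (by positivity) ?_ ha
  · refine hlt.le.trans (EReal.coe_le_coe_iff.2 ?_)
    rw [sub_add_eq_add_sub]
    exact sub_le_self _ (by positivity)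
  · rintro ζ hζ y hy (hζG | hyη)
    · refine ((hnear hy ζ hζ).2 hζG).trans_lt (EReal.coe_lt_coe_iff.2 ?_)
      have : 0 ≤ (|A| + B) / η ^ 2 * ‖y‖ ^ 2 := by positivity
      linarith [hδK ζ hζ]
    · refine (hA (ζ, y) ⟨hζ, hy⟩).trans_lt (EReal.coe_lt_coe_iff.2 ?_)
      rw [hyη, div_mul_cancel₀ _ (by positivity)]
      linarith [hδK ζ hζ, neg_le_of_abs_le (hB ζ hζ), le_abs_self A]

end Plurisubharmonic

section CanonicalFactor

lemma norm_canonicalFactor_mul_norm_sub_le {R : ℝ} {a ζ : ℂ} (ha : ‖a‖ ≤ R) (hζ : ‖ζ‖ ≤ R)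
    (hζa : ζ ≠ a) : ‖Complex.canonicalFactor R a ζ‖ * ‖ζ - a‖ ≤ 2 * R := by
  have hR : 0 ≤ R := (norm_nonneg a).trans ha
  have hsub : 0 < ‖ζ - a‖ := norm_pos_iff.2 (sub_ne_zero.2 hζa)
  rw [Complex.canonicalFactor_apply, norm_div, norm_mul, Complex.norm_real, Real.norm_of_nonneg hR,
    ← div_div, div_mul_cancel₀ _ hsub.ne']
  refine div_le_of_le_mul₀ hR (by positivity) ?_
  calc ‖(R : ℂ) ^ 2 - (starRingEnd ℂ) a * ζ‖
    _ ≤ ‖(R : ℂ) ^ 2‖ + ‖(starRingEnd ℂ) a * ζ‖ := norm_sub_le _ _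
    _ = R ^ 2 + ‖a‖ * ‖ζ‖ := by simp
    _ ≤ R ^ 2 + R * R := by gcongr
    _ = 2 * R * R := by ring

lemma eventually_le_neg_mul_log_norm_canonicalFactor {R : ℝ} {a : ℂ} (ha : ‖a‖ < R) {c : ℝ}
    (hc0 : 0 ≤ c) (hc : c < 1) (C : ℝ) :
    ∀ᶠ ζ in 𝓝[≠] a, Real.log ‖ζ - a‖ + C ≤ -c * Real.log ‖Complex.canonicalFactor R a ζ‖ := by
  have hlog : Tendsto (fun ζ => (1 - c) * Real.log ‖ζ - a‖) (𝓝[≠] a) atBot :=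
    (Real.tendsto_log_nhdsGT_zero.comp (tendsto_norm_sub_self_nhdsNE a)).const_mul_atBot
      (sub_pos.2 hc)
  filter_upwards [hlog.eventually_le_atBot (-(c * Real.log (2 * R)) - C), self_mem_nhdsWithin,
    mem_nhdsWithin_of_mem_nhds (continuous_norm.continuousAt.eventually_lt_const ha)]
    with ζ hζ hne hζR
  have hcf : 0 < ‖Complex.canonicalFactor R a ζ‖ := norm_pos_iff.2
    (Complex.canonicalFactor_ne_zero (by simpa using ha) (by simpa using hζR.le) hne)
  have hle := Real.log_le_log (mul_pos hcf (norm_pos_iff.2 (sub_ne_zero.2 hne)))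
    (norm_canonicalFactor_mul_norm_sub_le ha.le hζR.le hne)
  rw [Real.log_mul hcf.ne' (norm_ne_zero_iff.2 (sub_ne_zero.2 hne))] at hle
  nlinarith [mul_le_mul_of_nonneg_left hle hc0]

lemma continuousAt_log_norm_canonicalFactor {R : ℝ} {a b : ℂ} (ha : a ∈ ball 0 R)
    (hb : b ∈ ball 0 R) (hba : b ≠ a) :
    ContinuousAt (fun R : ℝ => Real.log ‖Complex.canonicalFactor R a b‖) R := by
  have hne := Complex.canonicalFactor_ne_zero ha (ball_subset_closedBall hb) hba
  have hR : (R : ℂ) * (b - a) ≠ 0 :=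
    mul_ne_zero (Complex.ofReal_ne_zero.2 (pos_of_mem_ball ha).ne') (sub_ne_zero.2 hba)
  simp only [Complex.canonicalFactor_apply] at hne ⊢
  have hnum : ContinuousAt (fun R : ℝ => (R : ℂ) ^ 2 - (starRingEnd ℂ) a * b) R := by fun_prop
  have hden : ContinuousAt (fun R : ℝ => (R : ℂ) * (b - a)) R := by fun_prop
  exact (hnum.div hden hR).norm.log (norm_ne_zero_iff.2 hne)

end CanonicalFactor

lemma exists_eventually_le_log_norm_sub_add {E : Type*} [NormedAddCommGroup E] [NormedSpace ℂ E]
    {D : Set E} {u : E → EReal} {φ : ℂ → E} {a : ℂ} (hφ : DifferentiableAt ℂ φ a)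
    (hφD : ∀ᶠ ζ in 𝓝 a, φ ζ ∈ D) (hne : ∀ᶠ ζ in 𝓝[≠] a, φ ζ ≠ φ a)
    {C : ℝ} (hu : ∀ᶠ x in 𝓝[D] (φ a), u x ≤ ((Real.log ‖x - φ a‖ + C : ℝ) : EReal)) :
    ∃ C' : ℝ, ∀ᶠ ζ in 𝓝[≠] a, u (φ ζ) ≤ ((Real.log ‖ζ - a‖ + C' : ℝ) : EReal) := by
  obtain ⟨M, hM, hlip⟩ := hφ.isBigO_sub.exists_pos
  refine ⟨Real.log M + C, ?_⟩
  have hφa : Tendsto φ (𝓝 a) (𝓝[D] (φ a)) := tendsto_nhdsWithin_iff.2 ⟨hφ.continuousAt, hφD⟩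
  filter_upwards [hne, self_mem_nhdsWithin, mem_nhdsWithin_of_mem_nhds hlip.bound,
    mem_nhdsWithin_of_mem_nhds (hφa.eventually hu)] with ζ hφζ hζ hbound huζ
  refine huζ.trans (EReal.coe_le_coe_iff.2 ?_)
  have := Real.log_le_log (norm_pos_iff.2 (sub_ne_zero.2 hφζ)) hbound
  rw [Real.log_mul hM.ne' (norm_ne_zero_iff.2 (sub_ne_zero.2 hζ))] at this
  linarith

section GreenFunction

open InnerProductSpace

variable {n : ℕ} {D : Set (Cn n)} {u : Cn n → EReal}

lemma le_neg_mul_log_norm_canonicalFactor (hD : IsOpen D) (hu : PSHOn u D)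
    (hneg : ∀ x ∈ D, u x < 0) {φ : ℂ → Cn n} {R : ℝ} (hφ : AnalyticOnNhd ℂ φ (closedBall 0 R))
    (hφD : MapsTo φ (closedBall 0 R) D) {a : ℂ} (ha : a ∈ ball 0 R) {c : ℝ}
    (hpole : ∀ᶠ ζ in 𝓝[≠] a,
      u (φ ζ) ≤ ((-c * Real.log ‖Complex.canonicalFactor R a ζ‖ : ℝ) : EReal)) {b : ℂ}
    (hb : b ∈ closedBall 0 R) (hba : b ≠ a) :
    u (φ b) ≤ ((-c * Real.log ‖Complex.canonicalFactor R a b‖ : ℝ) : EReal) := by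
  obtain ⟨ρ, hρ, hpole⟩ := (nhdsWithin_hasBasis nhds_basis_closedBall _).eventually_iff.1
    (hpole.and (eventually_ne_nhdsWithin hba.symm))
  have hbρ : b ∉ ball a ρ := fun h => (hpole ⟨ball_subset_closedBall h, hba⟩).2 rfl
  have hne : ∀ ζ ∉ ball a ρ, ζ ≠ a := fun ζ hζ h => hζ (h ▸ mem_ball_self hρ)
  have hq : HarmonicOnNhd (fun ζ => -c * Real.log ‖Complex.canonicalFactor R a ζ‖)
      (closedBall 0 R \ ball a ρ) := fun ζ hζ =>
    ((Complex.analyticOnNhd_canonicalFactor R a ζ (hne ζ hζ.2)).harmonicAt_log_norm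
      (Complex.canonicalFactor_ne_zero ha hζ.1 (hne ζ hζ.2))).const_smul (c := -c)
  have hGK : ball 0 R \ closedBall a ρ ⊆ closedBall 0 R \ ball a ρ :=
    sdiff_subset_sdiff ball_subset_closedBall ball_subset_closedBall
  refine le_of_forall_mem_diff_le_of_harmonicOnNhd hD hu
    (fun x hx => ((hneg x hx).trans_le le_top).ne) ((isCompact_closedBall 0 R).diff isOpen_ball)
    (hφ.mono sdiff_subset) (hφD.mono_left sdiff_subset) (isOpen_ball.sdiff isClosed_closedBall)
    hGK hq.continuousOn (hq.mono hGK) ?_ ⟨hb, hbρ⟩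
  rintro ζ ⟨⟨hζR, hζρ⟩, hζ⟩
  by_cases hζa : ζ ∈ closedBall a ρ
  · exact (hpole ⟨hζa, hne ζ hζρ⟩).1
  · have hζ_sphere : ζ ∈ sphere 0 R :=
      (mem_closedBall.1 hζR).antisymm (not_lt.1 fun h => hζ ⟨h, hζa⟩)
    simpa [Complex.norm_canonicalFactor_eval_circle_eq_one ha hζ_sphere] using
      (hneg _ (hφD hζR)).le

-- Shrinking the disc by a factor `c < 1` makes `φ` holomorphic up to the boundary, and scaling the
-- Green function of the disc by `c` lets its pole absorb the constant in `log ‖ζ - a‖ + C`.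
theorem greenFn_le_neg_log_norm_canonicalFactor (hD : IsOpen D) {φ : ℂ → Cn n} {R : ℝ}
    (hφ : DifferentiableOn ℂ φ (ball 0 R)) (hinj : InjOn φ (ball 0 R))
    (hφD : MapsTo φ (ball 0 R) D) {a b : ℂ} (ha : a ∈ ball 0 R) (hb : b ∈ ball 0 R)
    (hba : b ≠ a) :
    greenFn D (φ a) (φ b) ≤ ((-Real.log ‖Complex.canonicalFactor R a b‖ : ℝ) : EReal) := by
  have haR : ball (0 : ℂ) R ∈ 𝓝 a := isOpen_ball.mem_nhds ha
  have hR : 0 < R := pos_of_mem_ball ha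
  have hφ_ne : ∀ᶠ ζ in 𝓝[≠] a, φ ζ ≠ φ a := by
    filter_upwards [self_mem_nhdsWithin, mem_nhdsWithin_of_mem_nhds haR] with ζ hζ hζR h
    exact hζ (hinj hζR ha h)
  refine sSup_le ?_
  rintro _ ⟨u, hu, hneg, ⟨C, hC⟩, rfl⟩
  obtain ⟨C', hC'⟩ := exists_eventually_le_log_norm_sub_add (hφ.differentiableAt haR)
    (eventually_of_mem haR hφD) hφ_ne hC
  have hlim : Tendsto (fun c : ℝ =>
      ((-c * Real.log ‖Complex.canonicalFactor (c * R) a b‖ : ℝ) : EReal)) (𝓝[<] 1)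
      (𝓝 (-Real.log ‖Complex.canonicalFactor R a b‖ : ℝ)) := by
    have hlog : Tendsto (fun c : ℝ => Real.log ‖Complex.canonicalFactor (c * R) a b‖) (𝓝 1)
        (𝓝 (Real.log ‖Complex.canonicalFactor R a b‖)) :=
      (continuousAt_log_norm_canonicalFactor ha hb hba).tendsto.comp
        (by simpa using (continuous_mul_const R).tendsto 1)
    exact (continuous_coe_real_ereal.tendsto _).comp <| by
      simpa using
        continuous_neg.continuousWithinAt.tendsto.mul (hlog.mono_left nhdsWithin_le_nhds)
  have hscale : ∀ x ∈ ball (0 : ℂ) R, ∀ᶠ c : ℝ in 𝓝[<] 1, x ∈ ball 0 (c * R) := fun x hx => by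
    simp only [mem_ball_zero_iff] at hx ⊢
    exact nhdsWithin_le_nhds <|
      (continuous_mul_const R).continuousAt.eventually_const_lt (by simpa using hx)
  refine ge_of_tendsto hlim ?_
  filter_upwards [self_mem_nhdsWithin, nhdsWithin_le_nhds (Ioi_mem_nhds zero_lt_one),
    hscale a ha, hscale b hb] with c hc1 hc0 hac hbc
  have hsub : closedBall (0 : ℂ) (c * R) ⊆ ball 0 R :=
    closedBall_subset_ball (mul_lt_of_lt_one_left hR hc1)
  refine le_neg_mul_log_norm_canonicalFactor hD hu hneg
    ((hφ.analyticOnNhd isOpen_ball).mono hsub) (hφD.mono_left hsub) hac ?_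
    (ball_subset_closedBall hbc) hba
  filter_upwards [hC', eventually_le_neg_mul_log_norm_canonicalFactor (by simpa using hac)
    (le_of_lt hc0) hc1 C'] with ζ h1 h2 using h1.trans (EReal.coe_le_coe_iff.2 h2)

theorem greenFn_le_log_norm_div_of_ball_subset_image (hD : IsOpen D) {f : Cn n → Cn n}
    (hf : DifferentiableOn ℂ f D) (hinj : InjOn f D) {r : ℝ} (hball : ball 0 r ⊆ f '' D)
    {z w : Cn n} (hz : z ∈ D) (hw : w ∈ D) (hfz : f z = 0) (hfw : f w ≠ 0) (hfwr : ‖f w‖ < r) :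
    greenFn D w z ≤ ((Real.log (‖f w‖ / r) : ℝ) : EReal) := by
  set g := Function.invFunOn f D
  have hfw_pos : 0 < ‖f w‖ := norm_pos_iff.2 hfw
  have hr : 0 < r := hfw_pos.trans hfwr
  have hline : MapsTo (fun ζ : ℂ => ζ • f w) (ball 0 (r / ‖f w‖)) (ball 0 r) := fun ζ hζ => by
    rw [mem_ball_zero_iff] at hζ ⊢
    rwa [norm_smul, ← lt_div_iff₀ hfw_pos]
  have hg_inj : InjOn g (f '' D) := Function.invFunOn_injOn_image f D
  have h := greenFn_le_neg_log_norm_canonicalFactor (φ := fun ζ => g (ζ • f w))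
    (R := r / ‖f w‖) (a := 1) (b := 0) hD
    ((differentiableOn_invFunOn rfl hD hf hinj).comp (by fun_prop) fun ζ hζ => hball (hline hζ))
    (hg_inj.comp (smul_left_injective ℂ hfw).injOn fun ζ hζ => hball (hline hζ))
    (fun ζ hζ => Function.invFunOn_mem (hball (hline hζ))) (by simpa [one_lt_div hfw_pos])
    (mem_ball_self (div_pos hr hfw_pos)) zero_ne_one
  have hgw : g (f w) = w := hinj.leftInvOn_invFunOn hw
  have hgz : g 0 = z := hfz ▸ hinj.leftInvOn_invFunOn hz
  have hcf : ‖Complex.canonicalFactor (r / ‖f w‖) 1 0‖ = (‖f w‖ / r)⁻¹ := by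
    simp [Complex.canonicalFactor_apply, sq, hr.ne', hfw_pos.ne', abs_of_pos hr]
  simpa only [hcf, Real.log_inv, neg_neg, one_smul, zero_smul, hgw, hgz] using h

end GreenFunction

section Localization

lemma subset_of_isPreconnected_of_disjoint_frontier {X : Type*} [TopologicalSpace X] {s u : Set X}
    (hs : IsPreconnected s) (hu : IsOpen u) (hsu : (s ∩ u).Nonempty)
    (hdisj : Disjoint s (frontier u)) : s ⊆ u := by
  have := isPreconnected_iff_preconnectedSpace.1 hs
  obtain ⟨x, hxs, hxu⟩ := hsu
  have huniv := (isClopen_preimage_val hu hdisj.symm).eq_univ ⟨⟨x, hxs⟩, hxu⟩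
  exact fun y hy => huniv.ge (mem_univ (⟨y, hy⟩ : s))

lemma erexp_nonneg (x : EReal) : 0 ≤ erexp x := by
  unfold erexp
  split_ifs <;> positivity

lemma erexp_le_of_le_log {x : EReal} {t : ℝ} (ht : 0 < t) (hx : x ≤ ((Real.log t : ℝ) : EReal)) :
    erexp x ≤ t := by
  unfold erexp
  split_ifs with hbot htop
  · exact ht.le
  · exact ht.le
  · rw [← Real.le_log_iff_exp_le ht]
    simpa using EReal.toReal_le_toReal hx hbot (EReal.coe_ne_top _)

variable {n : ℕ} {D U : Set (Cn n)} {z : Cn n}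

lemma greenFn_nonpos (w : Cn n) (hz : z ∈ D) : greenFn D w z ≤ 0 := by
  refine sSup_le ?_
  rintro _ ⟨u, -, hneg, -, rfl⟩
  exact (hneg z hz).le

lemma squeezing_nonneg : 0 ≤ squeezing D z :=
  Real.sSup_nonneg fun _ hr => hr.1.le

lemma le_squeezing [Nontrivial (Cn n)] {f : Cn n → Cn n} (hf : DifferentiableOn ℂ f D)
    (hinj : InjOn f D) (hmaps : MapsTo f D (ball 0 1)) (hfz : f z = 0) {r : ℝ} (hr : 0 < r)
    (hball : ball 0 r ⊆ f '' D) : r ≤ squeezing D z := by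
  refine le_csSup ⟨1, ?_⟩ ⟨hr, f, hf, hinj, hmaps, hfz, hball⟩
  rintro s ⟨-, g, -, -, hg, -, hs⟩
  by_contra! h
  obtain ⟨y, hy⟩ := exists_norm_eq (Cn n) zero_le_one
  exact absurd (hs.trans hg.image_subset (mem_ball_zero_iff.2 (hy ▸ h))) (by simp [hy])

lemma ball_subset_image_inter (hD : IsOpen D) (hU : IsOpen U) (hz : z ∈ D ∩ U) {f : Cn n → Cn n}
    (hf : DifferentiableOn ℂ f D) (hinj : InjOn f D) (hfz : f z = 0) {r s : ℝ} (hs : s ≤ r)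
    (hball : ball 0 r ⊆ f '' D)
    (hgreen : ∀ w ∈ D ∩ frontier U, s / r ≤ erexp (greenFn D w z)) :
    ball 0 s ⊆ f '' (D ∩ U) := by
  set g := Function.invFunOn f D
  rcases le_or_gt s 0 with hs0 | hs0
  · simp [ball_eq_empty.2 hs0]
  have hr : 0 < r := hs0.trans_le hs
  have hsD : ball 0 s ⊆ f '' D := (ball_subset_ball hs).trans hball
  have hgz : g 0 = z := hfz ▸ hinj.leftInvOn_invFunOn hz.1
  have hsub : g '' ball 0 s ⊆ U := by
    refine subset_of_isPreconnected_of_disjoint_frontier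
      ((convex_ball 0 s).isPreconnected.image g
        ((differentiableOn_invFunOn rfl hD hf hinj).continuousOn.mono hsD)) hU
      ⟨z, ⟨0, mem_ball_self hs0, hgz⟩, hz.2⟩ (disjoint_left.2 ?_)
    rintro _ ⟨y, hy, rfl⟩ hgy
    have hfy : f (g y) = y := Function.invFunOn_eq (hsD hy)
    have hgyD : g y ∈ D := Function.invFunOn_mem (hsD hy)
    have hy0 : 0 < ‖y‖ := norm_pos_iff.2 <| by
      rintro rfl
      exact (hU.frontier_eq ▸ hgy).2 (hgz ▸ hz.2)
    rw [mem_ball_zero_iff] at hy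
    have hle := greenFn_le_log_norm_div_of_ball_subset_image hD hf hinj hball hz.1 hgyD hfz
      (by rwa [hfy, ← norm_pos_iff]) (by rw [hfy]; exact hy.trans_le hs)
    rw [hfy] at hle
    have hsr := (hgreen _ ⟨hgyD, hgy⟩).trans (erexp_le_of_le_log (div_pos hy0 hr) hle)
    exact hy.not_ge ((div_le_div_iff_of_pos_right hr).1 hsr)
  exact fun y hy => ⟨g y, ⟨Function.invFunOn_mem (hsD hy), hsub ⟨y, hy, rfl⟩⟩,
    Function.invFunOn_eq (hsD hy)⟩

theorem squeezing_green_localization_general (hD : IsOpen D) (hU : IsOpen U)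
    (hDU : (D ∩ frontier U).Nonempty) (hz : z ∈ D ∩ U) :
    squeezing D z * sInf ((fun w => erexp (greenFn D w z)) '' (D ∩ frontier U)) ≤
      squeezing (D ∩ U) z := by
  obtain ⟨w, hw⟩ := hDU
  have : Nontrivial (Cn n) := ⟨z, w, fun h => (hU.frontier_eq ▸ hw.2).2 (h ▸ hz.2)⟩
  set m := sInf ((fun w => erexp (greenFn D w z)) '' (D ∩ frontier U))
  have hm_le : ∀ x ∈ D ∩ frontier U, m ≤ erexp (greenFn D x z) := fun x hx =>
    csInf_le ⟨0, forall_mem_image.2 fun _ _ => erexp_nonneg _⟩ ⟨x, hx, rfl⟩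
  have hm_one : m ≤ 1 :=
    (hm_le w hw).trans (erexp_le_of_le_log one_pos (by simpa using greenFn_nonpos w hz.1))
  have hm_nonneg : 0 ≤ m := Real.sInf_nonneg (forall_mem_image.2 fun _ _ => erexp_nonneg _)
  rcases hm_nonneg.eq_or_lt with hm | hm
  · rw [← hm, mul_zero]
    exact squeezing_nonneg
  rw [← le_div_iff₀ hm]
  refine Real.sSup_le ?_ (div_nonneg squeezing_nonneg hm.le)
  rintro r ⟨hr, f, hf, hinj, hmaps, hfz, hball⟩
  rw [le_div_iff₀ hm]
  refine le_squeezing (hf.mono inter_subset_left) (hinj.mono inter_subset_left)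
    (hmaps.mono_left inter_subset_left) hfz (mul_pos hr hm) ?_
  exact ball_subset_image_inter hD hU hz hf hinj hfz (mul_le_of_le_one_right hr.le hm_one) hball
    (by simpa [hr.ne'] using hm_le)

end Localization

/-- Localization of the squeezing function via the pluricomplex Green
function: `σ_{D∩U}(z) ≥ σ_D(z) · inf_{w ∈ D ∩ ∂U} exp(g_D(w,z))`. -/
theorem squeezing_green_localization {n : ℕ} (D : Set (Cn n)) (hD : IsOpen D)
    (hDconn : IsConnected D) (U : Set (Cn n)) (hU : IsOpen U)
    (hDU : (D ∩ U).Nonempty) (hDnU : (D \ U).Nonempty) :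
    ∀ z ∈ D ∩ U,
      squeezing (D ∩ U) z ≥
        squeezing D z * sInf ((fun w => erexp (greenFn D w z)) '' (D ∩ frontier U)) := by
  intro z hz
  refine squeezing_green_localization_general hD hU (not_disjoint_iff_nonempty_inter.1 fun h => ?_)
    hz
  exact sdiff_nonempty.1 hDnU
    (subset_of_isPreconnected_of_disjoint_frontier hDconn.isPreconnected hU hDU h)
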